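/- arXiv:2010.01385 — 3 statements merged into one kernel-verified Lean document; each statement's English description precedes it below -/
import Mathlib

section
/- Let Y₁, Y₂, Z₁, Z₂ be pairwise disjoint finite sets of variables over a field F, let g ∈ F[Y₁ ∪ Z₁] and h ∈ F[Y₂ ∪ Z₂] be multilinear polynomials (so g and h are variable-disjoint), and set Y = Y₁ ∪ Y₂ and Z = Z₁ ∪ Z₂. Then the rank of the partial derivative matrix of the product gh with respect to (Y, Z) equals the product of the rank of the partial derivative matrix of g with respect to (Y₁, Z₁) and the rank of the partial derivative matrix of h with respect to (Y₂, Z₂), i.e. rank(M_{gh}) = rank(M_g) · rank(M_h). -/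
/-- The partial derivative matrix of a multilinear polynomial `f ∈ F[Y ∪ Z]`:
rows are indexed by subsets `S ⊆ Y`, columns by subsets `T ⊆ Z`, and the
`(S, T)` entry is the coefficient in `f` of the monomial `∏_{y ∈ S} y · ∏_{z ∈ T} z`. -/
noncomputable def pdMatrix (F : Type) [Field F] (n : ℕ) (Y Z : Finset (Fin n))
    (f : MvPolynomial (Fin n) F) : Matrix (Finset (Fin n)) (Finset (Fin n)) F :=
  fun S T =>
    if S ⊆ Y ∧ T ⊆ Z then
      MvPolynomial.coeff (∑ i ∈ S ∪ T, Finsupp.single i 1) f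
    else 0

/-! Splitting a subset of `Y₁ ∪ Y₂` into its parts in `Y₁` and `Y₂`, and likewise for `Z₁ ∪ Z₂`,
turns the nonzero block of `M_{gh}` into the Kronecker product of the nonzero blocks of `M_g` and
`M_h`: as `g` and `h` share no variable, a monomial of `gh` factors in only one way as a monomial of
`g` times one of `h`. The rank of a Kronecker product is the product of the ranks. -/

open scoped Kronecker

section Rank

open Module TensorProduct

variable {K : Type*} [Field K]

theorem finrank_range_tensorProduct_map {V V' W W' : Type*} [AddCommGroup V] [Module K V]
    [AddCommGroup V'] [Module K V'] [AddCommGroup W] [Module K W] [AddCommGroup W'] [Module K W']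
    (f : V →ₗ[K] V') (g : W →ₗ[K] W') :
    finrank K (TensorProduct.map f g).range = finrank K f.range * finrank K g.range := by
  rw [range_map, ← range_mapIncl, LinearMap.finrank_range_of_inj
    (Flat.tensorProduct_mapIncl_injective_of_left f.range g.range), finrank_tensorProduct]

theorem rank_kronecker {l m n p : Type*} [Finite l] [Fintype m] [Finite n] [Fintype p]
    (A : Matrix l m K) (B : Matrix n p K) : (A ⊗ₖ B).rank = A.rank * B.rank := by
  classical
  have := Fintype.ofFinite l
  have := Fintype.ofFinite n
  let bl := Pi.basisFun K l
  let bm := Pi.basisFun K m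
  let bn := Pi.basisFun K n
  let bp := Pi.basisFun K p
  rw [(A ⊗ₖ B).rank_eq_finrank_range_toLin (bl.tensorProduct bn) (bm.tensorProduct bp),
    Matrix.toLin_kronecker, finrank_range_tensorProduct_map,
    ← A.rank_eq_finrank_range_toLin, ← B.rank_eq_finrank_range_toLin]

theorem span_range_comp_of_eq_zero {R M ι κ : Type*} [Semiring R] [AddCommMonoid M] [Module R M]
    {v : ι → M} {e : κ → ι} (hv : ∀ i ∉ Set.range e, v i = 0) :
    Submodule.span R (Set.range (v ∘ e)) = Submodule.span R (Set.range v) := by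
  refine le_antisymm (Submodule.span_mono (Set.range_comp_subset_range e v))
    (Submodule.span_le.2 ?_)
  rintro _ ⟨i, rfl⟩
  by_cases hi : i ∈ Set.range e
  · obtain ⟨k, rfl⟩ := hi
    exact Submodule.subset_span ⟨k, rfl⟩
  · rw [hv i hi]
    exact zero_mem _

theorem rank_submatrix_id_of_col_eq_zero {R m n n₀ : Type*} [CommSemiring R] [Fintype n]
    [Fintype n₀] (A : Matrix m n R) {c : n₀ → n} (hc : ∀ j ∉ Set.range c, A.col j = 0) :
    (A.submatrix id c).rank = A.rank := by
  rw [Matrix.rank_eq_finrank_span_cols, Matrix.rank_eq_finrank_span_cols,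
    ← span_range_comp_of_eq_zero hc]
  rfl

theorem rank_submatrix_id_of_row_eq_zero {m m₀ n : Type*} [Finite m] [Finite m₀] [Fintype n]
    (A : Matrix m n K) {r : m₀ → m} (hr : ∀ i ∉ Set.range r, A.row i = 0) :
    (A.submatrix r id).rank = A.rank := by
  rw [Matrix.rank_eq_finrank_span_row, Matrix.rank_eq_finrank_span_row,
    ← span_range_comp_of_eq_zero hr]
  rfl

theorem rank_submatrix_of_row_col_eq_zero {m m₀ n n₀ : Type*} [Finite m] [Finite m₀] [Fintype n]
    [Fintype n₀] (A : Matrix m n K) {r : m₀ → m} {c : n₀ → n}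
    (hr : ∀ i ∉ Set.range r, A.row i = 0) (hc : ∀ j ∉ Set.range c, A.col j = 0) :
    (A.submatrix r c).rank = A.rank :=
  calc (A.submatrix r c).rank
    _ = (A.submatrix r id).rank :=
      rank_submatrix_id_of_col_eq_zero (A.submatrix r id) fun j hj =>
        funext fun i => congrFun (hc j hj) (r i)
    _ = A.rank := rank_submatrix_id_of_row_eq_zero A hr

end Rank

section Coeff

theorem finsupp_left_eq_of_add_eq_add_of_disjoint {σ M : Type*} [AddZeroClass M]
    {a a' b b' : σ →₀ M} {V W : Finset σ} (hVW : Disjoint V W)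
    (ha : a.support ⊆ V) (ha' : a'.support ⊆ V)
    (hb : b.support ⊆ W) (hb' : b'.support ⊆ W) (hab : a + b = a' + b') : a = a' := by
  classical
  have filter_of_subset {d : σ →₀ M} (hd : d.support ⊆ V) : d.filter (· ∈ V) = d :=
    (Finsupp.filter_eq_self_iff _ _).2 fun i hi => hd (Finsupp.mem_support_iff.2 hi)
  have filter_of_disjoint {d : σ →₀ M} (hd : d.support ⊆ W) : d.filter (· ∈ V) = 0 :=
    (Finsupp.filter_eq_zero_iff _ _).2 fun i hi =>
      Finsupp.notMem_support_iff.1 fun hid => Finset.disjoint_left.1 hVW hi (hd hid)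
  calc a = (a + b).filter (· ∈ V) := by
        rw [Finsupp.filter_add, filter_of_subset ha, filter_of_disjoint hb, add_zero]
    _ = a' := by
        rw [hab, Finsupp.filter_add, filter_of_subset ha', filter_of_disjoint hb', add_zero]

theorem coeff_add_mul_of_disjoint {σ R : Type*} [CommSemiring R] {g h : MvPolynomial σ R}
    {V W : Finset σ} (hVW : Disjoint V W) (hg : g.vars ⊆ V) (hh : h.vars ⊆ W)
    {a b : σ →₀ ℕ} (ha : a.support ⊆ V) (hb : b.support ⊆ W) :
    (g * h).coeff (a + b) = g.coeff a * h.coeff b := by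
  classical
  rw [MvPolynomial.coeff_mul]
  refine Finset.sum_eq_single (a, b) ?_ (by simp)
  rintro ⟨a', b'⟩ hab' hne
  by_contra hcoeff
  have ha' : a'.support ⊆ V := (MvPolynomial.support_subset_vars_of_mem_support
    (MvPolynomial.mem_support_iff.2 (left_ne_zero_of_mul hcoeff))).trans hg
  have hb' : b'.support ⊆ W := (MvPolynomial.support_subset_vars_of_mem_support
    (MvPolynomial.mem_support_iff.2 (right_ne_zero_of_mul hcoeff))).trans hh
  have hsum : a' + b' = a + b := Finset.HasAntidiagonal.mem_antidiagonal.1 hab'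
  have haa' : a' = a := finsupp_left_eq_of_add_eq_add_of_disjoint hVW ha' ha hb' hb hsum
  subst haa'
  exact hne (Prod.ext rfl (add_left_cancel hsum))

theorem support_sum_single_one_subset {σ : Type*} (S : Finset σ) :
    (∑ i ∈ S, Finsupp.single i 1 : σ →₀ ℕ).support ⊆ S := by
  classical
  refine Finsupp.support_finsetSum.trans (Finset.biUnion_subset.2 fun i hi => ?_)
  exact Finsupp.support_single_subset.trans (Finset.singleton_subset_iff.2 hi)

end Coeff

section PowersetUnion

variable {α : Type*} [DecidableEq α]

/-- The union map `(S₁, S₂) ↦ S₁ ∪ S₂` on pairs of subsets `S₁ ⊆ A`, `S₂ ⊆ B`. It reindexes the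
rows and columns of the partial derivative matrix of a product. -/
def powersetUnion (A B : Finset α) (S : A.powerset × B.powerset) : Finset α :=
  S.1 ∪ S.2

theorem mem_range_powersetUnion {A B S : Finset α} (hS : S ⊆ A ∪ B) :
    S ∈ Set.range (powersetUnion A B) := by
  refine ⟨(⟨S ∩ A, Finset.mem_powerset.2 Finset.inter_subset_right⟩,
    ⟨S ∩ B, Finset.mem_powerset.2 Finset.inter_subset_right⟩), ?_⟩
  rw [powersetUnion, ← Finset.inter_union_distrib_left, Finset.inter_eq_left.2 hS]

end PowersetUnion

section PdMatrix

variable {F : Type} [Field F] {n : ℕ}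

theorem pdMatrix_row_eq_zero {Y S : Finset (Fin n)} (hS : ¬S ⊆ Y) (Z : Finset (Fin n))
    (f : MvPolynomial (Fin n) F) : (pdMatrix F n Y Z f).row S = 0 :=
  funext fun _ => if_neg fun hST => hS hST.1

theorem pdMatrix_col_eq_zero {Z T : Finset (Fin n)} (hT : ¬T ⊆ Z) (Y : Finset (Fin n))
    (f : MvPolynomial (Fin n) F) : (pdMatrix F n Y Z f).col T = 0 :=
  funext fun _ => if_neg fun hST => hT hST.2

theorem rank_pdMatrix_submatrix {ι κ : Type*} [Finite ι] [Fintype κ] {Y Z : Finset (Fin n)}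
    (f : MvPolynomial (Fin n) F) {r : ι → Finset (Fin n)} {c : κ → Finset (Fin n)}
    (hr : ∀ S ⊆ Y, S ∈ Set.range r) (hc : ∀ T ⊆ Z, T ∈ Set.range c) :
    ((pdMatrix F n Y Z f).submatrix r c).rank = (pdMatrix F n Y Z f).rank :=
  rank_submatrix_of_row_col_eq_zero _
    (fun S hS => pdMatrix_row_eq_zero (mt (hr S) hS) Z f)
    (fun T hT => pdMatrix_col_eq_zero (mt (hc T) hT) Y f)

theorem rank_pdMatrix_submatrix_powerset (Y Z : Finset (Fin n)) (f : MvPolynomial (Fin n) F) :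
    ((pdMatrix F n Y Z f).submatrix ((↑) : Y.powerset → _) ((↑) : Z.powerset → _)).rank =
      (pdMatrix F n Y Z f).rank :=
  rank_pdMatrix_submatrix f (fun S hS => ⟨⟨S, Finset.mem_powerset.2 hS⟩, rfl⟩)
    (fun T hT => ⟨⟨T, Finset.mem_powerset.2 hT⟩, rfl⟩)

theorem pdMatrix_mul_apply_union {Y₁ Y₂ Z₁ Z₂ : Finset (Fin n)} {g h : MvPolynomial (Fin n) F}
    (hdisj : Disjoint (Y₁ ∪ Z₁) (Y₂ ∪ Z₂)) (hg : g.vars ⊆ Y₁ ∪ Z₁) (hh : h.vars ⊆ Y₂ ∪ Z₂)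
    {S₁ S₂ T₁ T₂ : Finset (Fin n)} (hS₁ : S₁ ⊆ Y₁) (hS₂ : S₂ ⊆ Y₂) (hT₁ : T₁ ⊆ Z₁)
    (hT₂ : T₂ ⊆ Z₂) :
    pdMatrix F n (Y₁ ∪ Y₂) (Z₁ ∪ Z₂) (g * h) (S₁ ∪ S₂) (T₁ ∪ T₂) =
      pdMatrix F n Y₁ Z₁ g S₁ T₁ * pdMatrix F n Y₂ Z₂ h S₂ T₂ := by
  have hST₁ : S₁ ∪ T₁ ⊆ Y₁ ∪ Z₁ := Finset.union_subset_union hS₁ hT₁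
  have hST₂ : S₂ ∪ T₂ ⊆ Y₂ ∪ Z₂ := Finset.union_subset_union hS₂ hT₂
  simp only [pdMatrix]
  rw [if_pos ⟨Finset.union_subset_union hS₁ hS₂, Finset.union_subset_union hT₁ hT₂⟩,
    if_pos ⟨hS₁, hT₁⟩, if_pos ⟨hS₂, hT₂⟩, Finset.union_union_union_comm,
    Finset.sum_union (hdisj.mono hST₁ hST₂)]
  exact coeff_add_mul_of_disjoint hdisj hg hh
    ((support_sum_single_one_subset _).trans hST₁) ((support_sum_single_one_subset _).trans hST₂)

theorem pdMatrix_mul_submatrix_eq_kronecker {Y₁ Y₂ Z₁ Z₂ : Finset (Fin n)}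
    {g h : MvPolynomial (Fin n) F} (hdisj : Disjoint (Y₁ ∪ Z₁) (Y₂ ∪ Z₂))
    (hg : g.vars ⊆ Y₁ ∪ Z₁) (hh : h.vars ⊆ Y₂ ∪ Z₂) :
    (pdMatrix F n (Y₁ ∪ Y₂) (Z₁ ∪ Z₂) (g * h)).submatrix
        (powersetUnion Y₁ Y₂) (powersetUnion Z₁ Z₂) =
      (pdMatrix F n Y₁ Z₁ g).submatrix ((↑) : Y₁.powerset → _) ((↑) : Z₁.powerset → _) ⊗ₖ
        (pdMatrix F n Y₂ Z₂ h).submatrix ((↑) : Y₂.powerset → _) ((↑) : Z₂.powerset → _) := by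
  ext ⟨S₁, S₂⟩ ⟨T₁, T₂⟩
  exact pdMatrix_mul_apply_union hdisj hg hh (Finset.mem_powerset.1 S₁.2)
    (Finset.mem_powerset.1 S₂.2) (Finset.mem_powerset.1 T₁.2) (Finset.mem_powerset.1 T₂.2)

theorem rank_pdMatrix_mul_general {Y₁ Y₂ Z₁ Z₂ : Finset (Fin n)} {g h : MvPolynomial (Fin n) F}
    (hdisj : Disjoint (Y₁ ∪ Z₁) (Y₂ ∪ Z₂)) (hg : g.vars ⊆ Y₁ ∪ Z₁) (hh : h.vars ⊆ Y₂ ∪ Z₂) :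
    (pdMatrix F n (Y₁ ∪ Y₂) (Z₁ ∪ Z₂) (g * h)).rank =
      (pdMatrix F n Y₁ Z₁ g).rank * (pdMatrix F n Y₂ Z₂ h).rank := by
  rw [← rank_pdMatrix_submatrix (g * h) (fun _ => mem_range_powersetUnion)
      (fun _ => mem_range_powersetUnion),
    pdMatrix_mul_submatrix_eq_kronecker hdisj hg hh, rank_kronecker,
    rank_pdMatrix_submatrix_powerset, rank_pdMatrix_submatrix_powerset]

end PdMatrix

/-- multiplicativity of the rank of the partial derivative matrix for
variable-disjoint multilinear polynomials: if `g ∈ F[Y₁ ∪ Z₁]`, `h ∈ F[Y₂ ∪ Z₂]` with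
`Y₁, Y₂, Z₁, Z₂` pairwise disjoint, then w.r.t. `Y = Y₁ ∪ Y₂`, `Z = Z₁ ∪ Z₂` we have
`rank(M_{gh}) = rank(M_g) · rank(M_h)`. -/
theorem rank_pdMatrix_mul (F : Type) [Field F] (n : ℕ)
    (Y₁ Y₂ Z₁ Z₂ : Finset (Fin n))
    (hY₁Y₂ : Disjoint Y₁ Y₂) (hY₁Z₁ : Disjoint Y₁ Z₁) (hY₁Z₂ : Disjoint Y₁ Z₂)
    (hY₂Z₁ : Disjoint Y₂ Z₁) (hY₂Z₂ : Disjoint Y₂ Z₂) (hZ₁Z₂ : Disjoint Z₁ Z₂)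
    (g h : MvPolynomial (Fin n) F)
    (hg1 : ∀ i, g.degreeOf i ≤ 1) (hh1 : ∀ i, h.degreeOf i ≤ 1)
    (hgv : g.vars ⊆ Y₁ ∪ Z₁) (hhv : h.vars ⊆ Y₂ ∪ Z₂) :
    (pdMatrix F n (Y₁ ∪ Y₂) (Z₁ ∪ Z₂) (g * h)).rank =
      (pdMatrix F n Y₁ Z₁ g).rank * (pdMatrix F n Y₂ Z₂ h).rank := by
  exact rank_pdMatrix_mul_general (by simp [hY₁Y₂, hY₂Z₁.symm, hY₁Z₂, hZ₁Z₂]) hgv hhv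
end

section
/- There exist a constant k ∈ ℕ, a constant ε > 0, a field G (a field of rational functions in auxiliary variables over an arbitrary base field), and, for infinitely many n, a multilinear polynomial f_n ∈ G[x₁,...,x_n] computable by a read-k arithmetic formula over G, such that whenever f_n = f₁ + f₂ + ... + f_s where each f_i ∈ G[x₁,...,x_n] is computable by a read-once formula over G, then s ≥ 2^{εn}. -/
/-- An arithmetic formula over `F` in variables `x_0, …, x_{n-1}`: a rooted binary tree
whose leaves are labeled by variables or constants and whose internal nodes are `+` or `×`. -/
inductive Formula (F : Type) (n : ℕ) where
  | const : F → Formula F n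
  | var : Fin n → Formula F n
  | add : Formula F n → Formula F n → Formula F n
  | mul : Formula F n → Formula F n → Formula F n

namespace Formula

variable {F : Type} {n : ℕ}

/-- The polynomial computed by a formula. -/
noncomputable def eval [Field F] : Formula F n → MvPolynomial (Fin n) F
  | const c => MvPolynomial.C c
  | var i => MvPolynomial.X i
  | add f g => f.eval + g.eval
  | mul f g => f.eval * g.eval

/-- Number of leaves of the formula labeled by the variable `x_i`. -/
def readCount : Formula F n → Fin n → ℕ
  | const _, _ => 0
  | var j, i => if j = i then 1 else 0
  | add f g, i => f.readCount i + g.readCount i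
  | mul f g, i => f.readCount i + g.readCount i

/-- A read-`k` formula: every variable labels at most `k` leaves.  `ReadK 1` is the class
of read-once formulas (ROFs). -/
def ReadK (k : ℕ) (Φ : Formula F n) : Prop := ∀ i : Fin n, Φ.readCount i ≤ k

end Formula

/-!
The complexity of a function on the Boolean cube is measured by the total rank of its communication
matrices across all cuts of the variables. This measure is subadditive, and submultiplicative for
functions of disjoint sets of variables. A generic function `v` of `2 h` variables has full rank
across every balanced cut, so its measure is about `(2 √2) ^ (2 h)` up to polynomial factors. A
read-once formula in `n` variables stays below this rate: some subformula on three or four variables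
enters it affinely, and splitting such subformulas off one after the other bounds the measure by
`2.81 ^ n`, where `2.81 < 2 √2`.

For `h` large the measure of `v` is therefore at least `2 * 2.81 ^ (2 h)`. The product of `N` copies
of the multilinear extension of `v` in disjoint blocks of variables has a formula reading every
variable at most `2 ^ (2 h)` times. Kronecker products multiply ranks, so its measure is at least
`2 ^ N * 2.81 ^ (2 h N)`, and it is not a sum of fewer than `2 ^ N` read-once formulas.
-/

namespace CutRank

open Finset Matrix

section MatrixRank

variable {m n R : Type*} [Field R] [Fintype n]

theorem rank_add_le [Finite m] (A B : Matrix m n R) : (A + B).rank ≤ A.rank + B.rank := by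
  rw [Matrix.rank, mulVecLin_add]
  exact (Submodule.finrank_mono (LinearMap.range_add_le _ _)).trans
    (Submodule.finrank_add_le_finrank_add_finrank _ _)

theorem exists_eq_mul_of_rank [Finite m] (A : Matrix m n R) :
    ∃ (U : Matrix m (Fin A.rank) R) (V : Matrix (Fin A.rank) n R), A = U * V := by
  classical
  let basis : Module.Basis (Fin A.rank) R (LinearMap.range A.mulVecLin) := Module.finBasis R _
  let column (j : n) : LinearMap.range A.mulVecLin := ⟨A.col j, Pi.single j 1, by simp⟩
  refine ⟨of fun i k => (basis k : m → R) i, of fun k j => basis.repr (column j) k, ?_⟩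
  ext i j
  have expand : A.col j = ∑ k, basis.repr (column j) k • (basis k : m → R) := by
    simpa only [Submodule.coe_sum, Submodule.coe_smul] using
      (congrArg Subtype.val (basis.sum_repr (column j))).symm
  simpa [Matrix.mul_apply, mul_comm] using congrFun expand i

theorem mul_hadamard_mul {R m n k l : Type*} [CommSemiring R] [Fintype k] [Fintype l]
    (U : Matrix m k R) (V : Matrix k n R) (U' : Matrix m l R) (V' : Matrix l n R) :
    (U * V) ⊙ (U' * V') =
      (of fun i p => U i p.1 * U' i p.2 : Matrix m (k × l) R) *
        (of fun p j => V p.1 j * V' p.2 j : Matrix (k × l) n R) := by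
  ext i j
  simp only [hadamard_apply, Matrix.mul_apply, of_apply, sum_mul_sum, Fintype.sum_prod_type,
    mul_mul_mul_comm]

theorem rank_hadamard_le [Finite m] (A B : Matrix m n R) :
    (A ⊙ B).rank ≤ A.rank * B.rank := by
  obtain ⟨U, V, hA⟩ := exists_eq_mul_of_rank A
  obtain ⟨U', V', hB⟩ := exists_eq_mul_of_rank B
  calc (A ⊙ B).rank = ((U * V) ⊙ (U' * V')).rank := by rw [← hA, ← hB]
    _ ≤ (of fun i (p : Fin A.rank × Fin B.rank) => U i p.1 * U' i p.2).rank := by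
        rw [mul_hadamard_mul]
        exact rank_mul_le_left _ _
    _ ≤ Fintype.card (Fin A.rank × Fin B.rank) := rank_le_card_width _
    _ = A.rank * B.rank := by simp

theorem exists_mul_mul_eq_one (A : Matrix n n R) :
    ∃ (L : Matrix (Fin A.rank) n R) (U : Matrix n (Fin A.rank) R), L * A * U = 1 := by
  classical
  obtain ⟨L, U, e, -, -, normal_form⟩ := A.exists_rank_normal_form
  refine ⟨L.submatrix (e.symm ∘ Sum.inl) id, U.submatrix id (e.symm ∘ Sum.inl), ?_⟩
  have block : (L * A * U).submatrix (e.symm ∘ Sum.inl) (e.symm ∘ Sum.inl) = 1 := by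
    rw [normal_form]
    ext i j
    simp
  exact block

end MatrixRank

section PiKronecker

variable {β R : Type*} [Fintype β]

/-- The Kronecker product of a finite family of matrices; its rows and columns are indexed by
tuples of row and column indices of the factors. -/
def piKronecker [CommSemiring R] {l m : β → Type*} (A : ∀ b, Matrix (l b) (m b) R) :
    Matrix (∀ b, l b) (∀ b, m b) R :=
  of fun i j => ∏ b, A b (i b) (j b)

theorem piKronecker_mul [DecidableEq β] [CommSemiring R] {l m n : β → Type*}
    [∀ b, Fintype (m b)] (A : ∀ b, Matrix (l b) (m b) R) (B : ∀ b, Matrix (m b) (n b) R) :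
    piKronecker A * piKronecker B = piKronecker fun b => A b * B b := by
  ext i k
  simp only [piKronecker, Matrix.mul_apply, of_apply, Fintype.prod_sum, prod_mul_distrib]

theorem piKronecker_one [CommSemiring R] {l : β → Type*} [∀ b, DecidableEq (l b)]
    [DecidableEq (∀ b, l b)] :
    piKronecker (fun b => (1 : Matrix (l b) (l b) R)) = 1 := by
  ext i j
  simp [piKronecker, one_apply, prod_ite_zero, funext_iff]

theorem prod_rank_le_rank_piKronecker [DecidableEq β] [Field R] {l : β → Type*}
    [∀ b, Fintype (l b)] (A : ∀ b, Matrix (l b) (l b) R) :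
    ∏ b, (A b).rank ≤ (piKronecker A).rank := by
  classical
  choose L U hLU using fun b => exists_mul_mul_eq_one (A b)
  have identity : piKronecker L * piKronecker A * piKronecker U = 1 := by
    simp only [piKronecker_mul, hLU, piKronecker_one]
  calc ∏ b, (A b).rank = (piKronecker L * piKronecker A * piKronecker U).rank := by
        simp [identity, rank_one]
    _ ≤ (piKronecker L * piKronecker A).rank := rank_mul_le_left _ _
    _ ≤ (piKronecker A).rank := rank_mul_le_right _ _

end PiKronecker

section Cuts

variable {ι R : Type*} [DecidableEq ι]

/-- The communication matrix of a function `F` on the Boolean cube across the cut `(Y, Yᶜ)` of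
the variables: its `(a, b)` entry is `F` at the point that agrees with `a` on `Y` and with `b` off
`Y`. Rows and columns are indexed by the whole cube, so rows agreeing on `Y` are repeated. -/
def cutMatrix (Y : Finset ι) (F : (ι → Bool) → R) : Matrix (ι → Bool) (ι → Bool) R :=
  of fun a b => F (Y.piecewise a b)

theorem cutMatrix_compl [Fintype ι] (Y : Finset ι) (F : (ι → Bool) → R) :
    cutMatrix Yᶜ F = (cutMatrix Y F)ᵀ := by
  ext a b
  simp [cutMatrix, piecewise_compl]

theorem cutMatrix_congr {S Y Z : Finset ι} {F : (ι → Bool) → R} (hF : DependsOn F (S : Set ι))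
    (hYZ : Y ∩ S = Z ∩ S) : cutMatrix Y F = cutMatrix Z F := by
  ext a b
  refine hF fun i hi => ?_
  have mem_iff : i ∈ Y ↔ i ∈ Z := by
    simpa [mem_coe.1 hi] using congrArg (i ∈ ·) hYZ
  simp only [piecewise, mem_iff]

variable [Fintype ι] [Field R]

theorem rank_cutMatrix_le_two_pow_card_inter {S : Finset ι} {F : (ι → Bool) → R}
    (hF : DependsOn F (S : Set ι)) (Y : Finset ι) :
    (cutMatrix Y F).rank ≤ 2 ^ #(Y ∩ S) := by
  let extend (p : ↥(Y ∩ S) → Bool) (i : ι) : Bool := if hi : i ∈ Y ∩ S then p ⟨i, hi⟩ else false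
  have factors : cutMatrix Y F =
      ((cutMatrix Y F).submatrix extend id).submatrix (fun a i => a i) id := by
    ext a b
    refine hF fun i hi => ?_
    by_cases hY : i ∈ Y <;> simp [extend, hY, mem_coe.1 hi]
  rw [factors]
  refine (rank_submatrix_le _ _ _).trans ((rank_le_card_height _).trans ?_)
  rw [Fintype.card_fun, Fintype.card_bool, Fintype.card_coe]

theorem rank_cutMatrix_le_two_pow_min {S : Finset ι} {F : (ι → Bool) → R}
    (hF : DependsOn F (S : Set ι)) {Y : Finset ι} (hY : Y ⊆ S) :
    (cutMatrix Y F).rank ≤ 2 ^ min #Y (#S - #Y) := by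
  rw [(pow_right_mono₀ one_le_two).map_min]
  refine le_min ?_ ?_
  · simpa [inter_eq_left.2 hY] using rank_cutMatrix_le_two_pow_card_inter hF Y
  · rw [← rank_transpose, ← cutMatrix_compl, ← card_sdiff_of_subset hY,
      sdiff_eq_inter_compl, inter_comm]
    exact rank_cutMatrix_le_two_pow_card_inter hF Yᶜ

/-- The complexity measure of the proof: the total rank of the communication matrices of `F` across
all cuts of the variables in `S`. It is meant for functions that depend only on `S`. -/
noncomputable def cutRankSum (S : Finset ι) (F : (ι → Bool) → R) : ℕ :=
  ∑ Y ∈ S.powerset, (cutMatrix Y F).rank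

theorem cutRankSum_add_le (S : Finset ι) (F H : (ι → Bool) → R) :
    cutRankSum S (F + H) ≤ cutRankSum S F + cutRankSum S H := by
  rw [cutRankSum, cutRankSum, cutRankSum, ← sum_add_distrib]
  exact sum_le_sum fun Y _ => rank_add_le (cutMatrix Y F) (cutMatrix Y H)

theorem cutRankSum_sum_le {κ : Type*} (S : Finset ι) (s : Finset κ) (F : κ → (ι → Bool) → R) :
    cutRankSum S (∑ k ∈ s, F k) ≤ ∑ k ∈ s, cutRankSum S (F k) := by
  have zero : cutRankSum S (0 : (ι → Bool) → R) = 0 :=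
    sum_eq_zero fun Y _ => rank_zero
  exact le_sum_of_subadditive (cutRankSum S) zero.le (cutRankSum_add_le S) s F

theorem rank_cutMatrix_union_mul_le {S T Y Z : Finset ι} {F H : (ι → Bool) → R}
    (hST : Disjoint S T) (hF : DependsOn F (S : Set ι)) (hH : DependsOn H (T : Set ι))
    (hY : Y ⊆ S) (hZ : Z ⊆ T) :
    (cutMatrix (Y ∪ Z) (F * H)).rank ≤ (cutMatrix Y F).rank * (cutMatrix Z H).rank := by
  have restrict_F : (Y ∪ Z) ∩ S = Y ∩ S := by
    rw [union_inter_distrib_right, disjoint_iff_inter_eq_empty.1 (hST.symm.mono_left hZ),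
      union_empty]
  have restrict_H : (Y ∪ Z) ∩ T = Z ∩ T := by
    rw [union_inter_distrib_right, disjoint_iff_inter_eq_empty.1 (hST.mono_left hY), empty_union]
  rw [← cutMatrix_congr hF restrict_F, ← cutMatrix_congr hH restrict_H]
  exact rank_hadamard_le (cutMatrix (Y ∪ Z) F) (cutMatrix (Y ∪ Z) H)

theorem cutRankSum_union_mul_le {S T : Finset ι} {F H : (ι → Bool) → R} (hST : Disjoint S T)
    (hF : DependsOn F (S : Set ι)) (hH : DependsOn H (T : Set ι)) :
    cutRankSum (S ∪ T) (F * H) ≤ cutRankSum S F * cutRankSum T H := by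
  calc cutRankSum (S ∪ T) (F * H)
      = ∑ Y ∈ (S.powerset ×ˢ T.powerset).image fun q => q.1 ∪ q.2,
          (cutMatrix Y (F * H)).rank := by rw [cutRankSum, powerset_union]; rfl
    _ ≤ ∑ q ∈ S.powerset ×ˢ T.powerset, (cutMatrix (q.1 ∪ q.2) (F * H)).rank :=
        sum_image_le_of_nonneg fun _ _ => Nat.zero_le _
    _ ≤ ∑ q ∈ S.powerset ×ˢ T.powerset, (cutMatrix q.1 F).rank * (cutMatrix q.2 H).rank := by
        refine sum_le_sum fun q hq => ?_
        rw [mem_product, mem_powerset, mem_powerset] at hq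
        exact rank_cutMatrix_union_mul_le hST hF hH hq.1 hq.2
    _ = cutRankSum S F * cutRankSum T H := by rw [cutRankSum, cutRankSum, sum_mul_sum, sum_product]

theorem cutRankSum_one_le (S : Finset ι) : cutRankSum S (1 : (ι → Bool) → R) ≤ 2 ^ #S := by
  have rank_le_one (Y : Finset ι) : (cutMatrix Y (1 : (ι → Bool) → R)).rank ≤ 1 := by
    have constant : DependsOn (1 : (ι → Bool) → R) ((∅ : Finset ι) : Set ι) := fun _ _ _ => rfl
    simpa using rank_cutMatrix_le_two_pow_card_inter constant Y
  calc cutRankSum S (1 : (ι → Bool) → R) ≤ ∑ _Y ∈ S.powerset, 1 :=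
        sum_le_sum fun Y _ => rank_le_one Y
    _ = 2 ^ #S := by simp

theorem cutRankSum_add_mul_le {S P : Finset ι} {F H K : (ι → Bool) → R} (hP : P ⊆ S)
    (hF : DependsOn F ((S \ P : Finset ι) : Set ι))
    (hH : DependsOn H ((S \ P : Finset ι) : Set ι)) (hK : DependsOn K (P : Set ι)) :
    cutRankSum S (F + H * K) ≤
      cutRankSum (S \ P) F * 2 ^ #P + cutRankSum (S \ P) H * cutRankSum P K := by
  have constant : DependsOn (1 : (ι → Bool) → R) (P : Set ι) := fun _ _ _ => rfl
  calc cutRankSum S (F + H * K)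
      = cutRankSum (S \ P ∪ P) (F * 1 + H * K) := by rw [sdiff_union_of_subset hP, mul_one]
    _ ≤ cutRankSum (S \ P ∪ P) (F * 1) + cutRankSum (S \ P ∪ P) (H * K) := cutRankSum_add_le _ _ _
    _ ≤ cutRankSum (S \ P) F * cutRankSum P (1 : (ι → Bool) → R) +
          cutRankSum (S \ P) H * cutRankSum P K :=
        add_le_add (cutRankSum_union_mul_le sdiff_disjoint hF constant)
          (cutRankSum_union_mul_le sdiff_disjoint hH hK)
    _ ≤ cutRankSum (S \ P) F * 2 ^ #P + cutRankSum (S \ P) H * cutRankSum P K := by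
        gcongr
        exact cutRankSum_one_le P

theorem cutRankSum_le_sum_choose {S : Finset ι} {F : (ι → Bool) → R}
    (hF : DependsOn F (S : Set ι)) :
    cutRankSum S F ≤ ∑ j ∈ range (#S + 1), (#S).choose j * 2 ^ min j (#S - j) :=
  calc cutRankSum S F ≤ ∑ Y ∈ S.powerset, 2 ^ min #Y (#S - #Y) :=
        sum_le_sum fun _ hY => rank_cutMatrix_le_two_pow_min hF (mem_powerset.1 hY)
    _ = ∑ j ∈ range (#S + 1), (#S).choose j * 2 ^ min j (#S - j) := by
        simp only [sum_powerset_apply_card (fun j => 2 ^ min j (#S - j)), smul_eq_mul]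

end Cuts

section ReadOnce

variable {ι R : Type*} [DecidableEq ι] [CommSemiring R] {S T : Finset ι} {F H : (ι → Bool) → R}

/-- `ReadOnce S F` says that the function `F` on the Boolean cube is computed by a read-once formula
whose variables lie in `S`. A single gate `a F H + b F + c H` stands for both `F + H` and `F * H`,
and a constant may claim any set of variables. -/
inductive ReadOnce : Finset ι → ((ι → Bool) → R) → Prop
  | const (S : Finset ι) (c : R) : ReadOnce S fun _ => c
  | var (i : ι) : ReadOnce {i} fun x => if x i then 1 else 0
  | gate {S T : Finset ι} {F H : (ι → Bool) → R} (a b c : R) (hST : Disjoint S T)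
      (hF : ReadOnce S F) (hH : ReadOnce T H) :
      ReadOnce (S ∪ T) fun x => a * (F x * H x) + b * F x + c * H x

namespace ReadOnce

theorem add (hST : Disjoint S T) (hF : ReadOnce S F) (hH : ReadOnce T H) :
    ReadOnce (S ∪ T) (F + H) := by
  convert gate 0 1 1 hST hF hH using 1
  ext x
  simp

theorem mul (hST : Disjoint S T) (hF : ReadOnce S F) (hH : ReadOnce T H) :
    ReadOnce (S ∪ T) (F * H) := by
  convert gate 1 0 0 hST hF hH using 1
  ext x
  simp

theorem mono (hF : ReadOnce S F) (hST : S ⊆ T) : ReadOnce T F := by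
  convert add disjoint_sdiff hF (const (T \ S) 0) using 1
  · exact (union_sdiff_of_subset hST).symm
  · ext x
    simp

theorem dependsOn (hF : ReadOnce S F) : DependsOn F (S : Set ι) := by
  induction hF with
  | const S c => exact fun _ _ _ => rfl
  | var i => exact fun x y hxy => by simp [hxy i (by simp)]
  | gate a b c _ _ _ ihF ihH =>
    intro x y hxy
    have eqF := ihF fun i hi => hxy i (by simp [mem_coe.1 hi])
    have eqH := ihH fun i hi => hxy i (by simp [mem_coe.1 hi])
    simp only [eqF, eqH]

end ReadOnce

/-- `Peels t S F` says that a block `P` of between `t` and `2 t - 2` variables can be split off the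
read-once function `F` on `S`: a read-once function `K` of the variables in `P` enters `F` affinely,
with read-once coefficients in the other variables. -/
def Peels (t : ℕ) (S : Finset ι) (F : (ι → Bool) → R) : Prop :=
  ∃ P ⊆ S, t ≤ #P ∧ #P + 2 ≤ 2 * t ∧ ∃ A B K : (ι → Bool) → R,
    ReadOnce (S \ P) A ∧ ReadOnce (S \ P) B ∧ ReadOnce P K ∧ F = A + B * K

theorem Peels.gate {t : ℕ} (a b c : R) (hST : Disjoint S T) (hF : Peels t S F)
    (hH : ReadOnce T H) :
    Peels t (S ∪ T) fun x => a * (F x * H x) + b * F x + c * H x := by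
  obtain ⟨P, hPS, t_le, le_t, A, B, K, hA, hB, hK, rfl⟩ := hF
  have rest : (S ∪ T) \ P = S \ P ∪ T := by
    rw [union_sdiff_distrib, sdiff_eq_self_of_disjoint (hST.symm.mono_right hPS)]
  have disjoint_rest : Disjoint (S \ P) T := hST.mono_left sdiff_subset
  have hA' := ReadOnce.gate a b c disjoint_rest hA hH
  have hB' := ReadOnce.gate a b 0 disjoint_rest hB hH
  rw [← rest] at hA' hB'
  refine ⟨P, hPS.trans subset_union_left, t_le, le_t, _, _, K, hA', hB', hK, ?_⟩
  ext x
  simp only [Pi.add_apply, Pi.mul_apply]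
  ring

theorem ReadOnce.peels {t : ℕ} (ht : 2 ≤ t) (hF : ReadOnce S F) (hS : t ≤ #S) :
    Peels t S F := by
  induction hF with
  | const S c =>
    obtain ⟨P, hPS, hP⟩ := exists_subset_card_eq hS
    refine ⟨P, hPS, hP.ge, by omega, _, _, _, .const _ c, .const _ 0, .const _ 0, ?_⟩
    ext x
    simp
  | var i =>
    rw [card_singleton] at hS
    omega
  | @gate S T F H a b c hST hF hH ihF ihH =>
    by_cases hS' : t ≤ #S
    · exact (ihF hS').gate a b c hST hH
    by_cases hT' : t ≤ #T
    · convert (ihH hT').gate a c b hST.symm hF using 1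
      · exact union_comm S T
      · ext x
        ring
    have card_union : #(S ∪ T) = #S + #T := card_union_of_disjoint hST
    refine ⟨S ∪ T, subset_rfl, hS, by omega, _, _, _, .const _ 0, .const _ 1,
      .gate a b c hST hF hH, ?_⟩
    ext x
    simp

end ReadOnce

section ReadOnceBound

variable {ι R : Type*} [DecidableEq ι] [Fintype ι] [Field R] {S : Finset ι} {F : (ι → Bool) → R}

theorem cutRankSum_le_of_card_lt_three (hF : DependsOn F (S : Set ι)) (hS : #S < 3) :
    (cutRankSum S F : ℝ) ≤ 2.81 ^ #S := by
  have bound : (cutRankSum S F : ℝ) ≤ _ := Nat.cast_le.2 (cutRankSum_le_sum_choose hF)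
  refine bound.trans ?_
  interval_cases #S <;> norm_num [sum_range_succ, Nat.choose]

theorem two_pow_card_add_cutRankSum_le (hF : DependsOn F (S : Set ι)) (three_le : 3 ≤ #S)
    (le_four : #S ≤ 4) : (2 ^ #S + cutRankSum S F : ℝ) ≤ 2.81 ^ #S := by
  have bound : (cutRankSum S F : ℝ) ≤ _ := Nat.cast_le.2 (cutRankSum_le_sum_choose hF)
  refine (add_le_add_right bound _).trans ?_
  interval_cases #S <;> norm_num [sum_range_succ, Nat.choose]

/-- Peeling three or four variables off `S` costs a factor `2 ^ #P + cutRankSum P K`, which is where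
the rate drops below the value `2 √2` reached by functions of full rank. -/
theorem ReadOnce.cutRankSum_le (hF : ReadOnce S F) : (cutRankSum S F : ℝ) ≤ 2.81 ^ #S := by
  induction hS : #S using Nat.strong_induction_on generalizing S F with
  | _ n ih =>
  subst hS
  rcases lt_or_ge #S 3 with small | large
  · exact cutRankSum_le_of_card_lt_three hF.dependsOn small
  obtain ⟨P, hPS, le_card, card_le, A, B, K, hA, hB, hK, rfl⟩ := hF.peels (by norm_num) large
  have card_rest : #(S \ P) + #P = #S := card_sdiff_add_card_eq_card hPS
  have recursion : (cutRankSum S (A + B * K) : ℝ) ≤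
      cutRankSum (S \ P) A * 2 ^ #P + cutRankSum (S \ P) B * cutRankSum P K := by
    exact_mod_cast cutRankSum_add_mul_le hPS hA.dependsOn hB.dependsOn hK.dependsOn
  have boundA := ih _ (by omega) hA rfl
  have boundB := ih _ (by omega) hB rfl
  calc (cutRankSum S (A + B * K) : ℝ)
      ≤ 2.81 ^ #(S \ P) * 2 ^ #P + 2.81 ^ #(S \ P) * cutRankSum P K :=
        recursion.trans (by gcongr)
    _ = 2.81 ^ #(S \ P) * (2 ^ #P + cutRankSum P K) := by ring
    _ ≤ 2.81 ^ #(S \ P) * 2.81 ^ #P := by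
        gcongr
        exact two_pow_card_add_cutRankSum_le hK.dependsOn le_card (by omega)
    _ = 2.81 ^ #S := by rw [← pow_add, card_rest]

end ReadOnceBound

/-- The restriction of a polynomial to the Boolean cube, with `false` and `true` read as the ring
elements `0` and `1`. -/
noncomputable def onCube {ι R : Type*} [CommSemiring R] :
    MvPolynomial ι R →+* ((ι → Bool) → R) :=
  RingHom.pi fun x => MvPolynomial.eval fun i => if x i then 1 else 0

section ReadOnceFormula

variable {R : Type} {n : ℕ} {Φ Ψ : Formula R n}

/-- The set of variables labelling at least one leaf of a formula. -/
def readVars (Φ : Formula R n) : Finset (Fin n) :=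
  {i | Φ.readCount i ≠ 0}

theorem readVars_add : readVars (Φ.add Ψ) = readVars Φ ∪ readVars Ψ := by
  ext i
  simp [readVars, Formula.readCount, imp_iff_not_or]

theorem readVars_mul : readVars (Φ.mul Ψ) = readVars Φ ∪ readVars Ψ := by
  ext i
  simp [readVars, Formula.readCount, imp_iff_not_or]

theorem disjoint_readVars (hΦΨ : ∀ i, Φ.readCount i + Ψ.readCount i ≤ 1) :
    Disjoint (readVars Φ) (readVars Ψ) :=
  disjoint_filter.2 fun i _ _ => by have := hΦΨ i; omega

variable [Field R]

theorem readOnce_onCube_eval (hΦ : Φ.ReadK 1) :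
    ReadOnce (readVars Φ) (onCube Φ.eval) := by
  induction Φ with
  | const c =>
    have constant : onCube (Formula.const c : Formula R n).eval = fun _ => c := by
      ext x
      simp [Formula.eval, onCube]
    rw [constant]
    exact .const _ c
  | var i =>
    convert ReadOnce.var i using 1
    · ext j
      simp [readVars, Formula.readCount, eq_comm]
    · ext x
      simp [Formula.eval, onCube]
  | add Φ Ψ ihΦ ihΨ =>
    rw [Formula.eval, map_add, readVars_add]
    exact .add (disjoint_readVars hΦ)
      (ihΦ fun i => (Nat.le_add_right _ _).trans (hΦ i))
      (ihΨ fun i => (Nat.le_add_left _ _).trans (hΦ i))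
  | mul Φ Ψ ihΦ ihΨ =>
    rw [Formula.eval, map_mul, readVars_mul]
    exact .mul (disjoint_readVars hΦ)
      (ihΦ fun i => (Nat.le_add_right _ _).trans (hΦ i))
      (ihΨ fun i => (Nat.le_add_left _ _).trans (hΦ i))

theorem cutRankSum_onCube_eval_le (hΦ : Φ.ReadK 1) :
    (cutRankSum univ (onCube Φ.eval) : ℝ) ≤ 2.81 ^ n := by
  simpa using ((readOnce_onCube_eval hΦ).mono (subset_univ _)).cutRankSum_le

end ReadOnceFormula

section Blocks

variable {β γ ι R : Type*} [Fintype β]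

/-- The product over the blocks `b` of copies of `v` in disjoint sets of variables; `E` names the
variable number `i` of the block `b`. -/
def blockProd [CommMonoid R] (E : β × γ ≃ ι) (v : (γ → Bool) → R) : (ι → Bool) → R :=
  fun x => ∏ b, v fun i => x (E (b, i))

/-- A cut of all the variables is a choice of a cut for each block. -/
def blockCutEquiv [Fintype γ] [DecidableEq γ] [Fintype ι] [DecidableEq ι] (E : β × γ ≃ ι) :
    (β → Finset γ) ≃ Finset ι where
  toFun W := {j | (E.symm j).2 ∈ W (E.symm j).1}
  invFun Y b := {i | E (b, i) ∈ Y}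
  left_inv W := by
    ext b i
    simp
  right_inv Y := by
    ext j
    simp

variable [Fintype γ] [DecidableEq γ] [Fintype ι] [DecidableEq ι]

theorem cutMatrix_blockCutEquiv_blockProd [CommSemiring R] (E : β × γ ≃ ι) (v : (γ → Bool) → R)
    (W : β → Finset γ) :
    cutMatrix (blockCutEquiv E W) (blockProd E v) =
      (piKronecker fun b => cutMatrix (W b) v).submatrix
        ((E.symm.arrowCongr (.refl Bool)).trans (.curry β γ Bool))
        ((E.symm.arrowCongr (.refl Bool)).trans (.curry β γ Bool)) := by
  ext x y
  simp only [cutMatrix, blockProd, piKronecker, of_apply, submatrix_apply]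
  refine prod_congr rfl fun b _ => congrArg v ?_
  ext i
  by_cases hi : i ∈ W b <;> simp [blockCutEquiv, Function.curry, piecewise, hi]

theorem cutRankSum_pow_card_le_cutRankSum_blockProd [Field R] (E : β × γ ≃ ι)
    (v : (γ → Bool) → R) :
    cutRankSum univ v ^ Fintype.card β ≤ cutRankSum univ (blockProd E v) := by
  classical
  simp only [cutRankSum, powerset_univ]
  calc (∑ Y, (cutMatrix Y v).rank) ^ Fintype.card β
      = ∑ W : β → Finset γ, ∏ b, (cutMatrix (W b) v).rank := by
        rw [← Fintype.prod_sum fun (_ : β) Y => (cutMatrix Y v).rank, prod_const, card_univ]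
    _ ≤ ∑ W : β → Finset γ, (cutMatrix (blockCutEquiv E W) (blockProd E v)).rank := by
        refine sum_le_sum fun W _ => ?_
        rw [cutMatrix_blockCutEquiv_blockProd, rank_submatrix]
        exact prod_rank_le_rank_piKronecker fun b => cutMatrix (W b) v
    _ = ∑ Y, (cutMatrix Y (blockProd E v)).rank :=
        Equiv.sum_comp (blockCutEquiv E) fun Y => (cutMatrix Y (blockProd E v)).rank

end Blocks

section GenericFunction

open MvPolynomial

theorem exists_forall_eval_ne_zero {κ σ R : Type*} [CommRing R] [IsDomain R] [Infinite R]
    (s : Finset κ) (p : κ → MvPolynomial σ R) (hp : ∀ k ∈ s, p k ≠ 0) :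
    ∃ v : σ → R, ∀ k ∈ s, eval v (p k) ≠ 0 := by
  obtain ⟨v, hv⟩ : ∃ v, eval v (∏ k ∈ s, p k) ≠ 0 := by
    by_contra! vanishes
    exact prod_ne_zero_iff.2 hp (MvPolynomial.funext fun v => by simp [vanishes])
  rw [map_prod, prod_ne_zero_iff] at hv
  exact ⟨v, hv⟩

variable {γ R : Type*} [DecidableEq γ]

theorem eval_det_cutMatrix_X_submatrix [CommRing R] {κ : Type*} [Fintype κ] [DecidableEq κ]
    (v : (γ → Bool) → R) (Y : Finset γ) (f : κ → γ → Bool) :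
    eval v ((cutMatrix Y X).submatrix f f).det = ((cutMatrix Y v).submatrix f f).det := by
  rw [RingHom.map_det]
  congr 1
  ext p q
  simp [cutMatrix]

variable [Fintype γ] {Y : Finset γ}

/-- The point of the cube that restricts to `p` on `Y` and to the copy of `p` along `e` off `Y`. -/
def mirror (e : Y ≃ ↥Yᶜ) (p : Y → Bool) (i : γ) : Bool :=
  if hi : i ∈ Y then p ⟨i, hi⟩ else p (e.symm ⟨i, mem_compl.2 hi⟩)

/-- The equality function between the two sides of a cut, which are matched by `e`. -/
def mirrorIndicator (R : Type*) [Zero R] [One R] (e : Y ≃ ↥Yᶜ) (x : γ → Bool) : R :=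
  if ∀ i : Y, x i = x (e i) then 1 else 0

theorem cutMatrix_mirrorIndicator_submatrix_mirror [Zero R] [One R] (e : Y ≃ ↥Yᶜ) :
    (cutMatrix Y (mirrorIndicator R e)).submatrix (mirror e) (mirror e) = 1 := by
  ext p q
  have off_Y (i : Y) : (e i : γ) ∉ Y := mem_compl.1 (e i).2
  simp +contextual [cutMatrix, mirrorIndicator, mirror, one_apply, funext_iff, off_Y]

theorem det_cutMatrix_X_submatrix_mirror_ne_zero [CommRing R] [Nontrivial R] (e : Y ≃ ↥Yᶜ) :
    ((cutMatrix Y (X : _ → MvPolynomial (γ → Bool) R)).submatrix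
      (mirror e) (mirror e)).det ≠ 0 := by
  intro det_zero
  have specialised := eval_det_cutMatrix_X_submatrix (mirrorIndicator R e) Y (mirror e)
  rw [det_zero, map_zero, cutMatrix_mirrorIndicator_submatrix_mirror, det_one] at specialised
  exact zero_ne_one specialised

theorem exists_forall_two_pow_card_le_rank_cutMatrix (γ R : Type*) [Fintype γ] [DecidableEq γ]
    [Field R] [Infinite R] :
    ∃ v : (γ → Bool) → R,
      ∀ Y : Finset γ, 2 * #Y = Fintype.card γ → 2 ^ #Y ≤ (cutMatrix Y v).rank := by
  have matching (Y : {Y : Finset γ // 2 * #Y = Fintype.card γ}) : Nonempty (↥Y.1 ≃ ↥(Y.1)ᶜ) := by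
    refine ⟨Fintype.equivOfCardEq ?_⟩
    have := Y.2
    rw [Fintype.card_coe, Fintype.card_coe, card_compl]
    omega
  obtain ⟨e⟩ := Classical.nonempty_pi.2 matching
  have det_X_ne_zero Y := det_cutMatrix_X_submatrix_mirror_ne_zero (R := R) (e Y)
  obtain ⟨v, hv⟩ := exists_forall_eval_ne_zero univ _ fun Y _ => det_X_ne_zero Y
  refine ⟨v, fun Y hY => ?_⟩
  have det_ne_zero := hv ⟨Y, hY⟩ (mem_univ _)
  rw [eval_det_cutMatrix_X_submatrix] at det_ne_zero
  calc 2 ^ #Y = ((cutMatrix Y v).submatrix (mirror (e ⟨Y, hY⟩)) (mirror (e ⟨Y, hY⟩))).rank := by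
        simp [rank_of_det_ne_zero det_ne_zero]
    _ ≤ (cutMatrix Y v).rank := rank_submatrix_le _ _ _

theorem exists_choose_mul_two_pow_le_cutRankSum (R : Type*) [Field R] [Infinite R] (h : ℕ) :
    ∃ v : (Fin (2 * h) → Bool) → R, (2 * h).choose h * 2 ^ h ≤ cutRankSum univ v := by
  obtain ⟨v, hv⟩ := exists_forall_two_pow_card_le_rank_cutMatrix (Fin (2 * h)) R
  refine ⟨v, ?_⟩
  calc (2 * h).choose h * 2 ^ h
      = ∑ _Y ∈ powersetCard h (univ : Finset (Fin (2 * h))), 2 ^ h := by simp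
    _ ≤ ∑ Y ∈ powersetCard h univ, (cutMatrix Y v).rank := by
        refine sum_le_sum fun Y hY => ?_
        rw [mem_powersetCard_univ] at hY
        simpa [hY] using hv Y (by simp [hY])
    _ ≤ cutRankSum univ v :=
        sum_le_sum_of_subset fun Y hY => mem_powerset.2 (mem_powersetCard.1 hY).1

end GenericFunction

section HardPolynomial

theorem sum_sum_single_eq_one {β γ ι : Type*} [Fintype β] [Fintype γ] [DecidableEq ι]
    (E : β × γ ≃ ι) :
    ∑ b, ∑ i, (Pi.single (E (b, i)) 1 : ι → ℕ) = 1 := by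
  ext j
  rw [← Fintype.sum_prod_type' fun b i => (Pi.single (E (b, i)) 1 : ι → ℕ), Finset.sum_apply,
    sum_eq_single (E.symm j)]
  · simp
  · intro q _ hq
    exact Pi.single_eq_of_ne (by rintro rfl; simp at hq) 1
  · simp

open MvPolynomial

variable {β γ ι R : Type*} [CommRing R]

theorem onCube_C (c : R) (x : ι → Bool) : onCube (C c) x = c := by
  simp [onCube]

/-- The affine polynomial in the variable `j` whose value on the cube is the indicator of
`x j = t`. -/
noncomputable def literal (j : ι) (t : Bool) : MvPolynomial ι R :=
  if t then X j else C 1 + C (-1) * X j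

theorem onCube_literal (j : ι) (t : Bool) (x : ι → Bool) :
    onCube (literal j t : MvPolynomial ι R) x = if x j = t then 1 else 0 := by
  cases t <;> cases hx : x j <;> simp [onCube, literal, hx]

theorem degreeOf_literal_le [DecidableEq ι] (j : ι) (t : Bool) (i : ι) :
    (literal j t : MvPolynomial ι R).degreeOf i ≤ (Pi.single j 1 : ι → ℕ) i := by
  have degree_X : (X j : MvPolynomial ι R).degreeOf i ≤ (Pi.single j 1 : ι → ℕ) i := by
    cases subsingleton_or_nontrivial R
    · simp [Subsingleton.elim (X j : MvPolynomial ι R) 0]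
    · rw [degreeOf_X, Pi.single_apply]
  cases t
  · refine (degreeOf_add_le _ _ _).trans (max_le (by simp) ?_)
    exact (degreeOf_C_mul_le _ _ _).trans degree_X
  · exact degree_X

variable [Fintype γ] [DecidableEq γ]

/-- The multilinear polynomial interpolating `v` on the Boolean cube, in the variables
`g i`. -/
noncomputable def interpolant (g : γ → ι) (v : (γ → Bool) → R) : MvPolynomial ι R :=
  ∑ y : γ → Bool, C (v y) * ∏ i, literal (g i) (y i)

theorem onCube_interpolant (g : γ → ι) (v : (γ → Bool) → R) (x : ι → Bool) :
    onCube (interpolant g v) x = v (x ∘ g) := by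
  have indicator (y : γ → Bool) :
      onCube (C (v y) * ∏ i, literal (g i) (y i)) x = if x ∘ g = y then v y else 0 := by
    simp [onCube_C, onCube_literal, prod_ite_zero, funext_iff]
  simp only [interpolant, map_sum, Finset.sum_apply, indicator, sum_ite_eq, mem_univ, if_true]

theorem degreeOf_interpolant_le [DecidableEq ι] (g : γ → ι) (v : (γ → Bool) → R) (j : ι) :
    (interpolant g v).degreeOf j ≤ ∑ i, (Pi.single (g i) 1 : ι → ℕ) j := by
  refine (degreeOf_sum_le _ _ _).trans (Finset.sup_le fun y _ => ?_)
  refine (degreeOf_C_mul_le _ _ _).trans ((degreeOf_prod_le _ _ _).trans ?_)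
  exact sum_le_sum fun i _ => degreeOf_literal_le (g i) (y i) j

variable [Fintype β]

/-- The hard polynomial: a product of copies of the interpolant of `v` in disjoint blocks of
variables. -/
noncomputable def blockPoly (E : β × γ ≃ ι) (v : (γ → Bool) → R) : MvPolynomial ι R :=
  ∏ b, interpolant (fun i => E (b, i)) v

theorem onCube_blockPoly (E : β × γ ≃ ι) (v : (γ → Bool) → R) :
    onCube (blockPoly E v) = blockProd E v := by
  ext x
  simp [blockPoly, blockProd, onCube_interpolant, Function.comp_def]

theorem degreeOf_blockPoly_le_one (E : β × γ ≃ ι) (v : (γ → Bool) → R) (j : ι) :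
    (blockPoly E v).degreeOf j ≤ 1 := by
  classical
  calc (blockPoly E v).degreeOf j
      ≤ ∑ b, (interpolant (fun i => E (b, i)) v).degreeOf j := degreeOf_prod_le _ _ _
    _ ≤ ∑ b, ∑ i, (Pi.single (E (b, i)) 1 : ι → ℕ) j :=
        sum_le_sum fun b _ => degreeOf_interpolant_le _ v j
    _ = 1 := by simpa using congrFun (sum_sum_single_eq_one E) j

end HardPolynomial

section ReadCounts

variable {β γ κ : Type*} {R : Type} [Field R] {n : ℕ} {p q : MvPolynomial (Fin n) R}
  {r s : Fin n → ℕ}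

/-- The polynomial `p` is computed by a formula reading each variable `i` at most `r i` times. -/
def ComputableWithReads (p : MvPolynomial (Fin n) R) (r : Fin n → ℕ) : Prop :=
  ∃ Φ : Formula R n, Φ.eval = p ∧ Φ.readCount ≤ r

namespace ComputableWithReads

theorem C (c : R) : ComputableWithReads (MvPolynomial.C c : MvPolynomial (Fin n) R) 0 :=
  ⟨.const c, rfl, fun _ => le_rfl⟩

theorem X (j : Fin n) :
    ComputableWithReads (MvPolynomial.X j : MvPolynomial (Fin n) R) (Pi.single j 1) :=
  ⟨.var j, rfl, fun i => by simp [Formula.readCount, Pi.single_apply, eq_comm]⟩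

theorem add (hp : ComputableWithReads p r) (hq : ComputableWithReads q s) :
    ComputableWithReads (p + q) (r + s) := by
  obtain ⟨Φ, rfl, hΦ⟩ := hp
  obtain ⟨Ψ, rfl, hΨ⟩ := hq
  exact ⟨.add Φ Ψ, rfl, add_le_add hΦ hΨ⟩

theorem mul (hp : ComputableWithReads p r) (hq : ComputableWithReads q s) :
    ComputableWithReads (p * q) (r + s) := by
  obtain ⟨Φ, rfl, hΦ⟩ := hp
  obtain ⟨Ψ, rfl, hΨ⟩ := hq
  exact ⟨.mul Φ Ψ, rfl, add_le_add hΦ hΨ⟩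

theorem sum {p : κ → MvPolynomial (Fin n) R} {r : κ → Fin n → ℕ} (t : Finset κ)
    (hp : ∀ k, ComputableWithReads (p k) (r k)) :
    ComputableWithReads (∑ k ∈ t, p k) (∑ k ∈ t, r k) := by
  classical
  induction t using Finset.induction_on with
  | empty => simpa using C (n := n) (0 : R)
  | insert k t hk ih =>
    rw [sum_insert hk, sum_insert hk]
    exact (hp k).add ih

theorem prod {p : κ → MvPolynomial (Fin n) R} {r : κ → Fin n → ℕ} (t : Finset κ)
    (hp : ∀ k, ComputableWithReads (p k) (r k)) :
    ComputableWithReads (∏ k ∈ t, p k) (∑ k ∈ t, r k) := by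
  classical
  induction t using Finset.induction_on with
  | empty => simpa using C (n := n) (1 : R)
  | insert k t hk ih =>
    rw [prod_insert hk, sum_insert hk]
    exact (hp k).mul ih

theorem literal (j : Fin n) (t : Bool) :
    ComputableWithReads (CutRank.literal j t : MvPolynomial (Fin n) R) (Pi.single j 1) := by
  cases t
  · have reads := (C (n := n) (1 : R)).add ((C (-1)).mul (X j))
    rwa [zero_add, zero_add] at reads
  · exact X j

theorem interpolant [Fintype γ] [DecidableEq γ] (g : γ → Fin n) (v : (γ → Bool) → R) :
    ComputableWithReads (CutRank.interpolant g v)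
      (2 ^ Fintype.card γ • ∑ i, Pi.single (g i) 1) := by
  have reads := sum univ fun y => (C (v y)).mul (prod univ fun i => literal (g i) (y i))
  rw [zero_add, sum_const, card_univ, Fintype.card_fun, Fintype.card_bool] at reads
  exact reads

end ComputableWithReads

theorem exists_readK_eval_eq_blockPoly [Fintype β] [Fintype γ] [DecidableEq γ]
    (E : β × γ ≃ Fin n) (v : (γ → Bool) → R) :
    ∃ Φ : Formula R n, Φ.ReadK (2 ^ Fintype.card γ) ∧ Φ.eval = blockPoly E v := by
  obtain ⟨Φ, eval_eq, reads⟩ :=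
    ComputableWithReads.prod univ fun b => .interpolant (fun i => E (b, i)) v
  rw [← smul_sum, sum_sum_single_eq_one] at reads
  exact ⟨Φ, fun i => by simpa using reads i, eval_eq⟩

end ReadCounts

section Separation

theorem exists_two_mul_pow_le_choose_mul_two_pow :
    ∃ h : ℕ, 0 < h ∧ 2 * (2.81 : ℝ) ^ (2 * h) ≤ (2 * h).choose h * 2 ^ h := by
  have limit : Filter.Tendsto (fun h : ℕ => h * (2.81 ^ 2 / 8 : ℝ) ^ h) Filter.atTop (nhds 0) :=
    tendsto_self_mul_const_pow_of_lt_one (by norm_num) (by norm_num)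
  obtain ⟨h, small, h_pos⟩ :=
    ((limit.eventually_le_const (by norm_num : (0 : ℝ) < 1 / 4)).and
      (Filter.eventually_gt_atTop 0)).exists
  have central : (4 : ℝ) ^ h ≤ 2 * h * (2 * h).choose h := by
    exact_mod_cast Nat.four_pow_le_two_mul_self_mul_centralBinom h h_pos
  have geometric : 4 * h * (2.81 : ℝ) ^ (2 * h) ≤ 8 ^ h := by
    rw [div_pow, ← pow_mul, ← mul_div_assoc, div_le_iff₀ (by positivity)] at small
    linarith
  have h_pos' : (0 : ℝ) < 2 * h := by positivity
  refine ⟨h, h_pos, le_of_mul_le_mul_left ?_ h_pos'⟩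
  calc 2 * h * (2 * (2.81 : ℝ) ^ (2 * h)) = 4 * h * 2.81 ^ (2 * h) := by ring
    _ ≤ 8 ^ h := geometric
    _ = 4 ^ h * 2 ^ h := by rw [← mul_pow]; norm_num
    _ ≤ 2 * h * (2 * h).choose h * 2 ^ h := by gcongr
    _ = 2 * h * ((2 * h).choose h * 2 ^ h) := by ring

variable {R : Type} [Field R]

theorem two_pow_le_of_blockPoly_eq_sum {β γ κ : Type*} [Fintype β] [Fintype γ] [DecidableEq γ]
    [Fintype κ] {n : ℕ} {E : β × γ ≃ Fin n} {v : (γ → Bool) → R}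
    {fs : κ → MvPolynomial (Fin n) R}
    (hv : 2 * (2.81 : ℝ) ^ Fintype.card γ ≤ cutRankSum univ v)
    (hfs : ∀ j, ∃ Φ : Formula R n, Φ.ReadK 1 ∧ Φ.eval = fs j)
    (hsum : blockPoly E v = ∑ j, fs j) :
    (2 : ℝ) ^ Fintype.card β ≤ Fintype.card κ := by
  have card_eq : Fintype.card γ * Fintype.card β = n := by
    simpa [mul_comm] using Fintype.card_congr E
  have summand_le (j : κ) : (cutRankSum univ (onCube (fs j)) : ℝ) ≤ 2.81 ^ n := by
    obtain ⟨Φ, hΦ, eval_eq⟩ := hfs j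
    exact eval_eq ▸ cutRankSum_onCube_eval_le hΦ
  have decomposition : blockProd E v = ∑ j, onCube (fs j) := by
    rw [← onCube_blockPoly, hsum, map_sum]
  refine le_of_mul_le_mul_right ?_ (by positivity : (0 : ℝ) < 2.81 ^ n)
  calc (2 : ℝ) ^ Fintype.card β * 2.81 ^ n
      = (2 * 2.81 ^ Fintype.card γ) ^ Fintype.card β := by rw [mul_pow, ← pow_mul, card_eq]
    _ ≤ (cutRankSum univ v : ℝ) ^ Fintype.card β := by gcongr
    _ ≤ cutRankSum univ (∑ j, onCube (fs j)) := by
        rw [← decomposition]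
        exact_mod_cast cutRankSum_pow_card_le_cutRankSum_blockProd E v
    _ ≤ ∑ j, (cutRankSum univ (onCube (fs j)) : ℝ) := by
        exact_mod_cast cutRankSum_sum_le univ univ fun j => onCube (fs j)
    _ ≤ ∑ _j : κ, (2.81 : ℝ) ^ n := sum_le_sum fun j _ => summand_le j
    _ = Fintype.card κ * 2.81 ^ n := by simp

end Separation

end CutRank

open CutRank in
theorem sum_of_ROFs_lower_bound_general :
    ∃ (k : ℕ) (ε : ℝ), 0 < ε ∧ ∀ (G : Type) [Field G] [Infinite G],
      {n : ℕ |
        ∃ f : MvPolynomial (Fin n) G,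
          (∀ i, f.degreeOf i ≤ 1) ∧
          (∃ Φ : Formula G n, Formula.ReadK k Φ ∧ Φ.eval = f) ∧
          ∀ (s : ℕ) (fs : Fin s → MvPolynomial (Fin n) G),
            (∀ j, ∃ Φ : Formula G n, Formula.ReadK 1 Φ ∧ Φ.eval = fs j) →
            f = ∑ j, fs j →
            (2 : ℝ) ^ (ε * n) ≤ (s : ℝ)}.Infinite := by
  obtain ⟨h, h_pos, gap⟩ := exists_two_mul_pow_le_choose_mul_two_pow
  refine ⟨2 ^ (2 * h), 1 / (2 * h), by positivity, fun G _ _ => ?_⟩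
  obtain ⟨v, hv⟩ := exists_choose_mul_two_pow_le_cutRankSum G h
  have hv' : 2 * (2.81 : ℝ) ^ Fintype.card (Fin (2 * h)) ≤ cutRankSum Finset.univ v := by
    rw [Fintype.card_fin]
    exact gap.trans (by exact_mod_cast hv)
  refine Set.infinite_of_injective_forall_mem (f := fun N : ℕ => N * (2 * h))
    (mul_left_injective₀ (by positivity)) fun N => ?_
  refine ⟨blockPoly finProdFinEquiv v, degreeOf_blockPoly_le_one _ _, ?_, fun s fs hfs hsum => ?_⟩
  · simpa using exists_readK_eval_eq_blockPoly finProdFinEquiv v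
  · have exponent : (1 / (2 * h) : ℝ) * (N * (2 * h) : ℕ) = N := by
      push_cast
      field_simp
    rw [exponent, Real.rpow_natCast]
    simpa using two_pow_le_of_blockPoly_eq_sum hv' hfs hsum

/-- there are a constant `k`, a constant `ε > 0` and a field `G` such that for
infinitely many `n` there is a multilinear polynomial `f ∈ G[x_0, …, x_{n-1}]` computable by a
read-`k` formula over `G`, such that whenever `f = f_1 + ⋯ + f_s` with each `f_i` computable
by a read-once formula over `G`, we must have `s ≥ 2^{εn}`. -/
theorem sum_of_ROFs_lower_bound :
    ∃ (k : ℕ) (ε : ℝ), 0 < ε ∧ ∃ (G : Type) (_ : Field G),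
      {n : ℕ |
        ∃ f : MvPolynomial (Fin n) G,
          (∀ i, f.degreeOf i ≤ 1) ∧
          (∃ Φ : Formula G n, Formula.ReadK k Φ ∧ Φ.eval = f) ∧
          ∀ (s : ℕ) (fs : Fin s → MvPolynomial (Fin n) G),
            (∀ j, ∃ Φ : Formula G n, Formula.ReadK 1 Φ ∧ Φ.eval = fs j) →
            f = ∑ j, fs j →
            (2 : ℝ) ^ (ε * n) ≤ (s : ℝ)}.Infinite := by
  obtain ⟨k, ε, hε, lower_bound⟩ := sum_of_ROFs_lower_bound_general
  exact ⟨k, ε, hε, RatFunc ℚ, inferInstance, lower_bound (RatFunc ℚ)⟩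
end

section
/- There exist a constant c > 0, a polynomial bound p, and, for infinitely many n, a multilinear polynomial ĥ_n in n variables x₀,...,x_{n−1} over a suitable field extension G computable by a syntactically multilinear algebraic branching program of size at most p(n), with the following property: for every polynomial bound q, for all sufficiently large such n, whenever ĥ_n = f₁ + ... + f_s where each f_i ∈ G[x₀,...,x_{n−1}] is computable by a read-once oblivious algebraic branching program of size at most q(n), then s ≥ 2^{c·n^{1/500}}. -/
/-- A (layered) algebraic branching program over `F` in variables `x_0, …, x_{n-1}`.
Layer `j` (for `0 ≤ j ≤ m`) has `width j` nodes, numbered `0, …, width j - 1`; layers `0`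
and `m` consist of the single nodes `s` and `t`.  `label j u v = some e` means there is an
edge from node `u` of layer `j` to node `v` of layer `j+1` labeled by the constant or
variable `e`, and `label j u v = none` means there is no such edge. -/
structure ABP (F : Type) (n : ℕ) where
  m : ℕ
  width : ℕ → ℕ
  w0 : width 0 = 1
  wm : width m = 1
  label : ℕ → ℕ → ℕ → Option (F ⊕ Fin n)

namespace ABP

variable {F : Type} {n : ℕ}

/-- The polynomial contributed by one edge label (`none`, i.e. a missing edge, contributes `0`). -/
noncomputable def edgeVal [Field F] : Option (F ⊕ Fin n) → MvPolynomial (Fin n) F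
  | none => 0
  | some (Sum.inl c) => MvPolynomial.C c
  | some (Sum.inr i) => MvPolynomial.X i

/-- The polynomial computed by the ABP: the sum over all `s`-to-`t` paths of the product of
the edge labels along the path. -/
noncomputable def eval [Field F] (P : ABP F n) : MvPolynomial (Fin n) F :=
  ∑ π : (∀ i : Fin (P.m + 1), Fin (P.width i)), ∏ k : Fin P.m,
    edgeVal (P.label k (π k.castSucc) (π k.succ))

/-- The size of an ABP is its number of nodes. -/
def size (P : ABP F n) : ℕ := ∑ i ∈ Finset.range (P.m + 1), P.width i

/-- `π` describes an `s`-to-`t` path: `π j` is the node of layer `j` used by the path. -/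
def IsPath (P : ABP F n) (π : ℕ → ℕ) : Prop :=
  π 0 = 0 ∧ π P.m = 0 ∧ (∀ k, k ≤ P.m → π k < P.width k) ∧
    ∀ k, k < P.m → P.label k (π k) (π (k + 1)) ≠ none

/-- Syntactic multilinearity: on every `s`-to-`t` path, each variable appears at most once
as an edge label. -/
def SynMultilinear (P : ABP F n) : Prop :=
  ∀ π : ℕ → ℕ, P.IsPath π → ∀ x : Fin n,
    {k : ℕ | k < P.m ∧ P.label k (π k) (π (k + 1)) = some (Sum.inr x)}.ncard ≤ 1

/-- The variable `x` appears as a label of an edge leaving layer `j`. -/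
def VarInLayer (P : ABP F n) (x : Fin n) (j : ℕ) : Prop :=
  j < P.m ∧ ∃ u v : ℕ, u < P.width j ∧ v < P.width (j + 1) ∧
    P.label j u v = some (Sum.inr x)

/-- Obliviousness: for each layer, at most one variable appears on the edges leaving it. -/
def Oblivious (P : ABP F n) : Prop :=
  ∀ (j : ℕ) (x x' : Fin n), P.VarInLayer x j → P.VarInLayer x' j → x = x'

/-- Each variable appears in at most one layer. -/
def ReadOnceVars (P : ABP F n) : Prop :=
  ∀ (x : Fin n) (j j' : ℕ), P.VarInLayer x j → P.VarInLayer x j' → j = j'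

/-- A read-once oblivious ABP (ROABP): an oblivious syntactically multilinear ABP in which
each variable appears in at most one layer. -/
def IsROABP (P : ABP F n) : Prop :=
  P.Oblivious ∧ P.ReadOnceVars ∧ P.SynMultilinear

end ABP

/-!
The hard polynomial is a product of blocks. A block has two families `y`, `z` of `N` variables and
`N` selectors `w`, and equals `∑ ρ, w ρ * ∏ x, (y x + z (x + ρ))`; a branching program chooses `ρ`,
remembers it in its node, and multiplies out the binomials.

Fixing the selectors leaves a product of binomials over a perfect matching. If a set `Y` contains
one variable of every matched pair, the matrix of this product, with rows and columns indexed by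
`0`-`1` assignments of `Y` and of its complement (shifted by `-1`), is diagonal and hence has rank
`2 ^ (number of pairs)`.

A ROABP of size `w` reads the variables in some order, which we cut into `T` segments of equal
length. Cutting the program accordingly, its matrix has rank at most `w ^ T * 2 ^ B`, where `B` sums
over the segments the size of the smaller side of the partition. `B` falls short of the number of
pairs by half the total imbalance between `Y` and its complement in the segments.

Both the matching and `Y` are chosen at random. With probability at least `1 - 2 ^ (-t)` over the
`t` shifts, a constant fraction of the pairs is split between two segments, so many segments contain
the earlier element of at least `4 * K ^ 2` split pairs. Swapping which element of such a pair
belongs to `Y` does not affect earlier segments, so by anticoncentration of sums of signs each of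
these segments has imbalance at least `K` with probability at least `1 / 2` given the previous ones.
Hence for fewer than `2 ^ t` summands a union bound provides a choice for which every summand has
small rank, and subadditivity of rank yields a contradiction.
-/

namespace ABP

section Paths

variable {F : Type} {n : ℕ}

open Finset

lemma width_le_size (P : ABP F n) {k : ℕ} (hk : k ≤ P.m) : P.width k ≤ P.size :=
  single_le_sum (f := P.width) (fun _ _ => Nat.zero_le _) (mem_range.2 (by omega))

lemma isPath_extend {P : ABP F n} (π : ∀ i : Fin (P.m + 1), Fin (P.width i))
    (hπ : ∀ k : Fin P.m, P.label k (π k.castSucc) (π k.succ) ≠ none) :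
    P.IsPath fun k => if h : k < P.m + 1 then π ⟨k, h⟩ else 0 := by
  have lt_width (k : ℕ) (hk : k ≤ P.m) :
      (if h : k < P.m + 1 then (π ⟨k, h⟩ : ℕ) else 0) < P.width k := by
    rw [dif_pos (by omega)]
    exact (π ⟨k, _⟩).isLt
  refine ⟨?_, ?_, lt_width, fun k hk => ?_⟩
  · simpa only [P.w0, Nat.lt_one_iff] using lt_width 0 P.m.zero_le
  · simpa only [P.wm, Nat.lt_one_iff] using lt_width P.m le_rfl
  · beta_reduce
    rw [dif_pos (by omega), dif_pos (by omega)]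
    exact hπ ⟨k, hk⟩

variable [Field F]

/-- `P.pathPoly a u d v` is the sum, over all paths from node `u` of layer `a` to node `v` of
layer `a + d`, of the products of the edge labels. -/
noncomputable def pathPoly (P : ABP F n) (a u : ℕ) : ℕ → ℕ → MvPolynomial (Fin n) F
  | 0, v => if v = u then 1 else 0
  | d + 1, v => ∑ u' ∈ range (P.width (a + d)), pathPoly P a u d u' * edgeVal (P.label (a + d) u' v)

variable (P : ABP F n)

lemma pathPoly_zero (a u v : ℕ) : P.pathPoly a u 0 v = if v = u then 1 else 0 := rfl

lemma pathPoly_succ (a u d v : ℕ) :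
    P.pathPoly a u (d + 1) v =
      ∑ u' ∈ range (P.width (a + d)), P.pathPoly a u d u' * edgeVal (P.label (a + d) u' v) := rfl

lemma sum_prod_edgeVal_mul (m : ℕ) (φ : ℕ → MvPolynomial (Fin n) F) :
    ∑ π : (∀ i : Fin (m + 1), Fin (P.width i)),
        (∏ k : Fin m, edgeVal (P.label k (π k.castSucc) (π k.succ))) * φ (π (Fin.last m)) =
      ∑ v ∈ range (P.width m), P.pathPoly 0 0 m v * φ v := by
  induction m generalizing φ with
  | zero =>
    have source (π : ∀ i : Fin (0 + 1), Fin (P.width i)) : (π (Fin.last 0) : ℕ) = 0 := by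
      have := (π (Fin.last 0)).isLt
      simp only [Fin.val_last, P.w0] at this
      omega
    simp only [source, univ_eq_empty, prod_empty, one_mul]
    simp [pathPoly_zero, P.w0]
  | succ m ih =>
    let snoc := Fin.snoc (α := fun i : Fin (m + 2) => Fin (P.width i))
    have prod_snoc (π : ∀ i : Fin (m + 1), Fin (P.width i)) (v : Fin (P.width (m + 1))) :
        ∏ k : Fin (m + 1), edgeVal (P.label k (snoc π v k.castSucc) (snoc π v k.succ)) =
          (∏ k : Fin m, edgeVal (P.label k (π k.castSucc) (π k.succ))) *
            edgeVal (P.label m (π (Fin.last m)) v) := by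
      have snoc_succ (k : Fin m) : snoc π v k.castSucc.succ = π k.succ :=
        Fin.snoc_castSucc (α := fun i : Fin (m + 2) => Fin (P.width i)) v π k.succ
      rw [Fin.prod_univ_castSucc]
      simp only [snoc_succ]
      simp [snoc]
    calc
      _ = ∑ π : (∀ i : Fin (m + 1), Fin (P.width i)), ∑ v : Fin (P.width (m + 1)),
            (∏ k : Fin (m + 1), edgeVal (P.label k (snoc π v k.castSucc) (snoc π v k.succ))) *
              φ (snoc π v (Fin.last (m + 1))) := by
        rw [← (Fin.snocEquiv fun i : Fin (m + 2) => Fin (P.width i)).sum_comp,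
          Fintype.sum_prod_type, sum_comm]
        rfl
      _ = ∑ π : (∀ i : Fin (m + 1), Fin (P.width i)),
            (∏ k : Fin m, edgeVal (P.label k (π k.castSucc) (π k.succ))) *
              ∑ v ∈ range (P.width (m + 1)), edgeVal (P.label m (π (Fin.last m)) v) * φ v := by
        refine sum_congr rfl fun π _ => ?_
        rw [sum_range, mul_sum]
        refine sum_congr rfl fun v _ => ?_
        simp only [prod_snoc, snoc, Fin.snoc_last, mul_assoc]
      _ = _ := by
        rw [ih fun u => ∑ v ∈ range (P.width (m + 1)), edgeVal (P.label m u v) * φ v]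
        simp only [pathPoly_succ, zero_add, mul_sum, sum_mul, mul_assoc]
        exact sum_comm

lemma eval_eq_pathPoly : P.eval = P.pathPoly 0 0 P.m 0 := by
  simpa [P.wm, eval] using P.sum_prod_edgeVal_mul P.m fun _ => 1

lemma pathPoly_add (a u b d v : ℕ) (hv : v < P.width (a + b + d)) :
    P.pathPoly a u (b + d) v =
      ∑ u' ∈ range (P.width (a + b)), P.pathPoly a u b u' * P.pathPoly (a + b) u' d v := by
  induction d generalizing v with
  | zero =>
    rw [add_zero] at hv
    simp [pathPoly_zero, hv]
  | succ d ih =>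
    rw [← add_assoc, pathPoly_succ, ← add_assoc,
      sum_congr rfl fun w hw => by rw [ih w (mem_range.1 hw)]]
    simp only [pathPoly_succ, mul_sum, sum_mul, mul_assoc]
    exact sum_comm

lemma eval_pathPoly_congr {x y : Fin n → F} {a d : ℕ} (had : a + d ≤ P.m)
    (hxy : ∀ i j, P.VarInLayer i j → a ≤ j → j < a + d → x i = y i) (u v : ℕ)
    (hv : v < P.width (a + d)) :
    MvPolynomial.eval x (P.pathPoly a u d v) = MvPolynomial.eval y (P.pathPoly a u d v) := by
  induction d generalizing v with
  | zero => rw [pathPoly_zero]; split_ifs <;> simp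
  | succ d ih =>
    simp only [pathPoly_succ, map_sum, map_mul]
    refine sum_congr rfl fun u' hu' => ?_
    rw [mem_range] at hu'
    rw [ih (by omega) (fun i j hij haj hj => hxy i j hij haj (by omega)) u' hu']
    congr 1
    rcases hl : P.label (a + d) u' v with _ | (c | i)
    · simp [edgeVal]
    · simp [edgeVal]
    · simpa [edgeVal] using
        hxy i (a + d) ⟨by omega, u', v, hu', hv, hl⟩ (by omega) (by omega)

variable {P}

lemma degreeOf_edgeVal_le (i : Fin n) (l : Option (F ⊕ Fin n)) [Decidable (l = some (Sum.inr i))] :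
    (edgeVal l).degreeOf i ≤ if l = some (Sum.inr i) then 1 else 0 := by
  rcases l with _ | (c | j)
  · simp [edgeVal]
  · simp [edgeVal]
  · by_cases hij : i = j
    · simp [edgeVal, hij]
    · simp [edgeVal, MvPolynomial.degreeOf_X, hij]

lemma SynMultilinear.degreeOf_eval_le_one (hP : P.SynMultilinear) (i : Fin n) :
    P.eval.degreeOf i ≤ 1 := by
  classical
  refine (MvPolynomial.degreeOf_sum_le i _ _).trans (Finset.sup_le fun π _ => ?_)
  by_cases hπ : ∀ k : Fin P.m, P.label k (π k.castSucc) (π k.succ) ≠ none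
  · have reads_le := hP _ (isPath_extend π hπ) i
    refine (MvPolynomial.degreeOf_prod_le i _ _).trans <|
      (sum_le_sum fun k _ => degreeOf_edgeVal_le i _).trans ?_
    rw [← card_filter, ← Set.ncard_coe_finset]
    refine le_trans (Set.ncard_le_ncard_of_injOn Fin.val (fun k hk => ?_)
      Fin.val_injective.injOn ((Set.finite_lt_nat P.m).subset fun k hk => hk.1)) reads_le
    refine ⟨k.isLt, ?_⟩
    rw [dif_pos (by omega), dif_pos (by omega)]
    exact (mem_filter.1 hk).2
  · push Not at hπ
    obtain ⟨k, hk⟩ := hπ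
    rw [prod_eq_zero (mem_univ k) (by rw [hk]; rfl)]
    simp

end Paths

end ABP

/-- `f` is a sum of at most `r` products of a function of the coordinates in `Y` and a function of
the coordinates outside `Y`; for finite `α` this says that the matrix of `f` with rows indexed by
assignments of `Y` and columns by assignments of `Yᶜ` has rank at most `r`. -/
def HasSplitRankLE {V α R : Type} [CommSemiring R] (Y : Set V) (f : (V → α) → R) (r : ℕ) : Prop :=
  ∃ (ι : Type) (_ : Fintype ι) (A B : ι → (V → α) → R), Fintype.card ι ≤ r ∧
    (∀ i, DependsOn (A i) Y) ∧ (∀ i, DependsOn (B i) Yᶜ) ∧ ∀ z, f z = ∑ i, A i z * B i z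

namespace HasSplitRankLE

section Semiring

variable {V α R : Type} [CommSemiring R] {Y : Set V} {f g : (V → α) → R} {r r' : ℕ}

lemma compl (hf : HasSplitRankLE Y f r) : HasSplitRankLE Yᶜ f r := by
  obtain ⟨ι, _, A, B, hcard, hA, hB, hAB⟩ := hf
  exact ⟨ι, inferInstance, B, A, hcard, hB, by simpa using hA, fun z => by simp [hAB, mul_comm]⟩

lemma mono (hf : HasSplitRankLE Y f r) (hr : r ≤ r') : HasSplitRankLE Y f r' := by
  obtain ⟨ι, _, A, B, hcard, hAB⟩ := hf
  exact ⟨ι, inferInstance, A, B, hcard.trans hr, hAB⟩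

lemma mul (hf : HasSplitRankLE Y f r) (hg : HasSplitRankLE Y g r') :
    HasSplitRankLE Y (fun z => f z * g z) (r * r') := by
  obtain ⟨ι, _, A, B, hcard, hA, hB, hAB⟩ := hf
  obtain ⟨ι', _, A', B', hcard', hA', hB', hAB'⟩ := hg
  refine ⟨ι × ι', inferInstance, fun i z => A i.1 z * A' i.2 z, fun i z => B i.1 z * B' i.2 z,
    by simpa using Nat.mul_le_mul hcard hcard', fun i z z' h => ?_, fun i z z' h => ?_, fun z => ?_⟩
  · simp only [hA i.1 h, hA' i.2 h]
  · simp only [hB i.1 h, hB' i.2 h]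
  · simp only [hAB, hAB', Fintype.sum_mul_sum, Fintype.sum_prod_type, mul_mul_mul_comm]

lemma sum {κ : Type} (s : Finset κ) {f : κ → (V → α) → R}
    (hf : ∀ k ∈ s, HasSplitRankLE Y (f k) r) :
    HasSplitRankLE Y (fun z => ∑ k ∈ s, f k z) (s.card * r) := by
  choose ι _ A B hcard hA hB hAB using fun k : s => hf k k.2
  refine ⟨Σ k : s, ι k, inferInstance, fun i => A i.1 i.2, fun i => B i.1 i.2, ?_,
    fun i => hA i.1 i.2, fun i => hB i.1 i.2, fun z => ?_⟩
  · rw [Fintype.card_sigma, ← Fintype.card_coe s]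
    exact Finset.sum_le_card_nsmul _ _ _ fun k _ => hcard k
  · rw [Fintype.sum_sigma]
    exact (Finset.sum_coe_sort s fun k => f k z).symm.trans (Fintype.sum_congr _ _ fun k => hAB k z)

lemma of_dependsOn_inter [Finite V] [Fintype α] [Nonempty α] {S : Set V} (hf : DependsOn f S) :
    HasSplitRankLE Y f (Fintype.card α ^ (S ∩ Y).ncard) := by
  classical
  have := Fintype.ofFinite V
  let restrict (z : V → α) : ↥(S ∩ Y) → α := fun v => z v
  let extend (y : ↥(S ∩ Y) → α) (z : V → α) : V → α :=
    fun v => if h : v ∈ S ∩ Y then y ⟨v, h⟩ else if v ∈ Y then Classical.arbitrary α else z v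
  refine ⟨↥(S ∩ Y) → α, inferInstance, fun y z => if restrict z = y then 1 else 0,
    fun y z => f (extend y z), ?_, fun y z z' h => ?_, fun y z z' h => ?_, fun z => ?_⟩
  · rw [Fintype.card_fun, ← Nat.card_eq_fintype_card (α := ↥(S ∩ Y)), Nat.card_coe_set_eq]
  · have : restrict z = restrict z' := funext fun v => h v v.2.2
    simp only [this]
  · refine congrArg f (funext fun v => ?_)
    simp only [extend]
    split_ifs with hSY hY
    exacts [rfl, rfl, h v hY]
  · rw [Fintype.sum_eq_single (restrict z) fun y hy => by simp [hy.symm]]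
    simp only [if_true, one_mul]
    refine hf fun v hv => ?_
    by_cases hY : v ∈ Y <;> simp [extend, restrict, hv, hY]

lemma of_dependsOn [Finite V] [Fintype α] [Nonempty α] {S : Set V} (hf : DependsOn f S) :
    HasSplitRankLE Y f (Fintype.card α ^ min (S ∩ Y).ncard (S \ Y).ncard) := by
  rcases min_choice (S ∩ Y).ncard (S \ Y).ncard with h | h
  · rw [h]
    exact of_dependsOn_inter hf
  · rw [h, Set.sdiff_eq]
    simpa using (of_dependsOn_inter (Y := Yᶜ) hf).compl

end Semiring

open scoped Classical in
lemma card_le_of_diagonal {V α F κ : Type} [Field F] [Fintype κ] {Y : Set V} {f : (V → α) → F}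
    {r : ℕ} (hf : HasSplitRankLE Y f r) (a b : κ → V → α)
    (hzero : ∀ i j, i ≠ j → f (Y.piecewise (a i) (b j)) = 0)
    (hne : ∀ i, f (Y.piecewise (a i) (b i)) ≠ 0) : Fintype.card κ ≤ r := by
  obtain ⟨ι, _, A, B, hcard, hA, hB, hAB⟩ := hf
  let MA : Matrix κ ι F := fun i k => A k (a i)
  let MB : Matrix ι κ F := fun k j => B k (b j)
  have mul_apply (i j : κ) : (MA * MB) i j = f (Y.piecewise (a i) (b j)) := by
    rw [hAB, Matrix.mul_apply]
    refine Fintype.sum_congr _ _ fun k => congrArg₂ _ (hA k fun v hv => ?_) (hB k fun v hv => ?_)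
    · rw [Set.piecewise_eq_of_mem _ _ _ hv]
    · rw [Set.piecewise_eq_of_notMem _ _ _ hv]
  have mul_eq : MA * MB = Matrix.diagonal fun i => f (Y.piecewise (a i) (b i)) := by
    ext i j
    rw [mul_apply, Matrix.diagonal_apply]
    split_ifs with hij
    exacts [by rw [hij], hzero i j hij]
  have rank_mul : (MA * MB).rank = Fintype.card κ := by
    rw [mul_eq, Matrix.rank_diagonal, ← Fintype.card_congr (Equiv.Set.univ κ)]
    exact Fintype.card_congr (Equiv.subtypeEquivRight fun i => by simp [hne i])
  calc
    Fintype.card κ = (MA * MB).rank := rank_mul.symm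
    _ ≤ MA.rank := Matrix.rank_mul_le_left MA MB
    _ ≤ Fintype.card ι := Matrix.rank_le_card_width MA
    _ ≤ r := hcard

end HasSplitRankLE

lemma exists_segmentation {V β : Type} [Finite V] [LinearOrder β] (pos : V → β) {T M : ℕ}
    (hV : Nat.card V ≤ T * M) :
    ∃ seg : V → ℕ, (∀ v, seg v < T) ∧ (∀ k, (seg ⁻¹' {k}).ncard ≤ M) ∧
      ∀ v v', pos v < pos v' → seg v ≤ seg v' := by
  let e₀ : V ≃ Fin (Nat.card V) := Finite.equivFin V
  let e : V ≃ Fin (Nat.card V) := e₀.trans (Tuple.sort (pos ∘ e₀.symm)).symm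
  have pos_mono (v v' : V) (h : e v ≤ e v') : pos v ≤ pos v' := by
    simpa [e] using Tuple.monotone_sort (pos ∘ e₀.symm) h
  refine ⟨fun v => e v / M, fun v => ?_, fun k => ?_, fun v v' h => ?_⟩
  · exact Nat.div_lt_of_lt_mul ((e v).isLt.trans_le (hV.trans_eq (mul_comm T M)))
  · have maps (v : V) (hv : v ∈ (fun v => (e v : ℕ) / M) ⁻¹' {k}) :
        (e v : ℕ) ∈ (Finset.Ico (M * k) (M * k + M) : Set ℕ) := by
      have hM : 0 < M := Nat.pos_of_ne_zero fun h => by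
        have := (e v).isLt.trans_le hV
        simp [h] at this
      have div_eq : (e v : ℕ) / M = k := hv
      have := Nat.mod_lt (e v) hM
      have := Nat.div_add_mod (e v) M
      rw [div_eq] at this
      simp only [Finset.coe_Ico, Set.mem_Ico]
      omega
    refine (Set.ncard_le_ncard_of_injOn _ maps (Fin.val_injective.comp e.injective).injOn).trans ?_
    rw [Set.ncard_coe_finset, Nat.card_Ico, Nat.add_sub_cancel_left]
  · exact Nat.div_le_div_right (le_of_lt (not_le.1 fun h' => h.not_ge (pos_mono v' v h')))

/-- The number of elements of the `k`-th segment on the smaller side of the partition `Y`, `Yᶜ`. -/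
noncomputable def minSide {V : Type} (seg : V → ℕ) (Y : Set V) (k : ℕ) : ℕ :=
  min (seg ⁻¹' {k} ∩ Y).ncard (seg ⁻¹' {k} \ Y).ncard

namespace ABP

section ReadOrder

variable {F V : Type} {n : ℕ}

/-- `seg` numbers the variables `em v` by consecutive segments of the order in which the layers of
`P` read them; variables that `P` does not read may be in any segment. -/
def ReadsInOrder (P : ABP F n) (em : V → Fin n) (seg : V → ℕ) : Prop :=
  ∀ v v' j j', P.VarInLayer (em v) j → P.VarInLayer (em v') j' → j ≤ j' → seg v ≤ seg v'

variable {P : ABP F n} {em : V → Fin n} {seg : V → ℕ}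

lemma ReadsInOrder.comp {W : Type} (h : P.ReadsInOrder em seg) (φ : W → V) :
    P.ReadsInOrder (em ∘ φ) (seg ∘ φ) :=
  fun v v' => h (φ v) (φ v')

lemma IsROABP.exists_readsInOrder [Finite V] (hP : P.IsROABP) (hem : em.Injective) {T M : ℕ}
    (hV : Nat.card V ≤ T * M) :
    ∃ seg : V → ℕ, (∀ v, seg v < T) ∧ (∀ k, (seg ⁻¹' {k}).ncard ≤ M) ∧
      P.ReadsInOrder em seg := by
  obtain ⟨oblivious, read_once, -⟩ := hP
  let pos (v : V) : ℕ := sInf {j | P.VarInLayer (em v) j}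
  have pos_eq (v : V) (j : ℕ) (hj : P.VarInLayer (em v) j) : pos v = j :=
    read_once _ _ _ (Nat.sInf_mem (s := {j | P.VarInLayer (em v) j}) ⟨j, hj⟩) hj
  obtain ⟨seg, seg_lt, card_fiber_le, seg_mono⟩ := exists_segmentation pos hV
  refine ⟨seg, seg_lt, card_fiber_le, fun v v' j j' hj hj' hjj' => ?_⟩
  rcases hjj'.eq_or_lt with rfl | hlt
  · rw [hem (oblivious _ _ _ hj hj')]
  · exact seg_mono v v' (by rwa [pos_eq v j hj, pos_eq v' j' hj'])

lemma ReadsInOrder.exists_cuts (h : P.ReadsInOrder em seg) {T : ℕ} (hT : ∀ v, seg v < T) :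
    ∃ l : ℕ → ℕ, Monotone l ∧ l T = P.m ∧
      ∀ k v j, P.VarInLayer (em v) j → (j < l k ↔ seg v < k) := by
  let cuts (k : ℕ) : Set ℕ := {j | j = P.m ∨ ∃ v, k ≤ seg v ∧ P.VarInLayer (em v) j}
  have m_mem (k : ℕ) : P.m ∈ cuts k := Or.inl rfl
  refine ⟨fun k => sInf (cuts k), fun k k' hkk' => ?_, ?_,
    fun k v j hj => ⟨fun hlt => ?_, fun hlt => ?_⟩⟩
  · refine csInf_le_csInf (OrderBot.bddBelow _) ⟨_, m_mem k'⟩ ?_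
    exact fun j hj => hj.imp_right fun ⟨v, hv, hvj⟩ => ⟨v, hkk'.trans hv, hvj⟩
  · rcases Nat.sInf_mem ⟨_, m_mem T⟩ with hm | ⟨v, hv, -⟩
    · exact hm
    · exact absurd (hT v) hv.not_gt
  · by_contra! hk
    exact hlt.not_ge (Nat.sInf_le (Or.inr ⟨v, hk, hj⟩))
  · rcases Nat.sInf_mem ⟨_, m_mem k⟩ with hm | ⟨v', hv', hj'⟩
    · exact hj.1.trans_eq hm.symm
    · by_contra! hle
      exact (hlt.trans_le hv').not_ge (h v' v _ _ hj' hj hle)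

end ReadOrder

section SplitRank

variable {F V α : Type} [Field F] {n : ℕ} {P : ABP F n} {em : V → Fin n}
  {pt : (V → α) → Fin n → F}

lemma dependsOn_eval_pathPoly (hpt : ∀ i, DependsOn (fun z => pt z i) (em ⁻¹' {i})) {S : Set V}
    {a d : ℕ} (had : a + d ≤ P.m)
    (hS : ∀ v j, P.VarInLayer (em v) j → a ≤ j → j < a + d → v ∈ S)
    (u v : ℕ) (hv : v < P.width (a + d)) :
    DependsOn (fun z => MvPolynomial.eval (pt z) (P.pathPoly a u d v)) S := by
  refine fun z z' hz =>
    P.eval_pathPoly_congr had (fun i j hij haj hj => hpt i fun v' hv' => ?_) u v hv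
  exact hz v' (hS v' j (by rwa [show em v' = i from hv']) haj hj)

variable [Finite V] [Fintype α] [Nonempty α]

lemma hasSplitRankLE_eval_pathPoly_add (hpt : ∀ i, DependsOn (fun z => pt z i) (em ⁻¹' {i}))
    {Y S : Set V} {a d r : ℕ} (had : a + d ≤ P.m)
    (hS : ∀ v j, P.VarInLayer (em v) j → a ≤ j → j < a + d → v ∈ S)
    (hr : ∀ u < P.width a,
      HasSplitRankLE Y (fun z => MvPolynomial.eval (pt z) (P.pathPoly 0 0 a u)) r)
    {v : ℕ} (hv : v < P.width (a + d)) :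
    HasSplitRankLE Y (fun z => MvPolynomial.eval (pt z) (P.pathPoly 0 0 (a + d) v))
      (P.size * (r * Fintype.card α ^ min (S ∩ Y).ncard (S \ Y).ncard)) := by
  have factor (u : ℕ) (hu : u ∈ Finset.range (P.width a)) :=
    (hr u (Finset.mem_range.1 hu)).mul <|
      HasSplitRankLE.of_dependsOn (Y := Y) (dependsOn_eval_pathPoly hpt had hS u v hv)
  simp only [P.pathPoly_add 0 0 a d v (by rwa [zero_add]), map_sum, map_mul, zero_add]
  refine (HasSplitRankLE.sum _ factor).mono ?_
  rw [Finset.card_range]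
  exact Nat.mul_le_mul_right _ (P.width_le_size (by omega))

lemma ReadsInOrder.hasSplitRankLE_eval {seg : V → ℕ} (h : P.ReadsInOrder em seg) {T : ℕ}
    (hT : ∀ v, seg v < T) (hpt : ∀ i, DependsOn (fun z => pt z i) (em ⁻¹' {i})) (Y : Set V) :
    HasSplitRankLE Y (fun z => MvPolynomial.eval (pt z) P.eval)
      (P.size ^ T * Fintype.card α ^ ∑ k ∈ Finset.range T, minSide seg Y k) := by
  obtain ⟨l, l_mono, l_T, lt_cut⟩ := h.exists_cuts hT
  have rank_prefix (k : ℕ) (hk : k ≤ T) (v : ℕ) (hv : v < P.width (l k)) :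
      HasSplitRankLE Y (fun z => MvPolynomial.eval (pt z) (P.pathPoly 0 0 (l k) v))
        (P.size ^ k * Fintype.card α ^ ∑ k ∈ Finset.range k, minSide seg Y k) := by
    induction k generalizing v with
    | zero =>
      have nothing_read (v : V) (j : ℕ) (hj : P.VarInLayer (em v) j) (_ : 0 ≤ j)
          (hlt : j < 0 + l 0) : v ∈ (∅ : Set V) :=
        absurd ((lt_cut 0 v j hj).1 (by rwa [zero_add] at hlt)) (Nat.not_lt_zero _)
      simpa using HasSplitRankLE.of_dependsOn (Y := Y) (dependsOn_eval_pathPoly hpt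
        (by simpa [l_T] using l_mono hk) nothing_read 0 v (by simpa using hv))
    | succ k ih =>
      have hlT : l (k + 1) ≤ P.m := l_T ▸ l_mono hk
      obtain ⟨d, hd⟩ := Nat.exists_eq_add_of_le (l_mono k.le_succ)
      rw [hd] at hv hlT ⊢
      have only_segment (v : V) (j : ℕ) (hj : P.VarInLayer (em v) j) (hkj : l k ≤ j)
          (hlt : j < l k + d) : v ∈ seg ⁻¹' {k} := by
        have := (lt_cut (k + 1) v j hj).1 (hd ▸ hlt)
        have := (lt_cut k v j hj).not.1 hkj.not_gt
        simp only [Set.mem_preimage, Set.mem_singleton_iff]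
        omega
      refine (hasSplitRankLE_eval_pathPoly_add hpt hlT only_segment (ih (by omega)) hv).mono ?_
      rw [Finset.sum_range_succ, pow_succ', pow_add, mul_assoc, mul_assoc, minSide]
  rw [P.eval_eq_pathPoly, ← l_T]
  exact rank_prefix T le_rfl 0 (by simp [l_T, P.wm])

end SplitRank

end ABP

lemma sum_range_two_mul {R : Type} [AddCommMonoid R] (f : ℕ → R) (N : ℕ) :
    ∑ u ∈ Finset.range (2 * N), f u = ∑ ρ ∈ Finset.range N, (f (2 * ρ) + f (2 * ρ + 1)) := by
  induction N with
  | zero => simp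
  | succ N ih =>
    rw [Finset.sum_range_succ, ← ih, mul_add_one, Finset.sum_range_succ, Finset.sum_range_succ,
      add_assoc]

lemma sum_range_two_mul_ite_div_eq {R : Type} [NonUnitalNonAssocSemiring R] (f : ℕ → R) (b : R)
    {N ρ : ℕ} (hρ : ρ < N) :
    ∑ u ∈ Finset.range (2 * N), f u * (if u / 2 = ρ then b else 0) =
      (f (2 * ρ) + f (2 * ρ + 1)) * b := by
  rw [sum_range_two_mul, Finset.sum_eq_single_of_mem ρ (Finset.mem_range.2 hρ) fun ρ' _ h => by
    rw [if_neg (by omega), if_neg (by omega), mul_zero, mul_zero, add_zero]]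
  rw [if_pos (by omega), if_pos (by omega), add_mul]

section HardPolynomial

variable {F : Type} [Field F] {t N n : ℕ}

open MvPolynomial

/-- The `i`-th factor of `hardPoly`: the selector variable `e (none, i, ρ)` picks the matching
which pairs each `e (some true, i, x)` with `e (some false, i, x + ρ)`. -/
noncomputable def hardBlock (F : Type) [Field F] (e : Option Bool × Fin t × Fin N → Fin n)
    (i : Fin t) : MvPolynomial (Fin n) F :=
  ∑ ρ, X (e (none, i, ρ)) * ∏ x, (X (e (some true, i, x)) + X (e (some false, i, x + ρ)))

/-- The polynomial that is hard for sums of ROABPs: a product of `t` blocks on disjoint sets of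
`3 * N` variables when `e` is injective. -/
noncomputable def hardPoly (F : Type) [Field F] (e : Option Bool × Fin t × Fin N → Fin n) :
    MvPolynomial (Fin n) F :=
  ∏ i, hardBlock F e i

lemma eval_hardPoly (e : Option Bool × Fin t × Fin N → Fin n) {x : Fin n → F}
    {r : Fin t → Fin N} (hx : ∀ i ρ, x (e (none, i, ρ)) = if ρ = r i then 1 else 0) :
    eval x (hardPoly F e) =
      ∏ p : Fin t × Fin N, (x (e (some true, p)) + x (e (some false, p.1, p.2 + r p.1))) := by
  simp [hardPoly, hardBlock, hx, Fintype.prod_prod_type]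

lemma block_add_lt (i : Fin t) {d : ℕ} (hd : d ≤ N) : i * (N + 1) + d < t * (N + 1) := by
  have := Nat.mul_le_mul_right (N + 1) i.isLt
  rw [Nat.succ_mul] at this
  omega

variable [NeZero t] [NeZero N]

/-- The branching program for `hardPoly`. Block `i` occupies the layers from `i * (N + 1)` on: the
edges into the first new layer read the selector and lead to node `2 * ρ`, and the next `N` layers
multiply by the `N` binomials of the matching `ρ`, moving among the two nodes `2 * ρ` and
`2 * ρ + 1` according to which of the two summands is read. -/
def hardABP (F : Type) [Field F] (e : Option Bool × Fin t × Fin N → Fin n) : ABP F n where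
  m := t * (N + 1) + 1
  width k := if k = 0 ∨ k = t * (N + 1) + 1 then 1 else 2 * N
  w0 := by simp
  wm := by simp
  label k u v :=
    let i := Fin.ofNat t (k / (N + 1))
    let x := Fin.ofNat N (k % (N + 1) - 1)
    let ρ := Fin.ofNat N (v / 2)
    if k = t * (N + 1) then some (Sum.inl 1)
    else if k % (N + 1) = 0 then if v % 2 = 0 then some (Sum.inr (e (none, i, ρ))) else none
    else if u / 2 = v / 2 then
      some (Sum.inr (if v % 2 = 0 then e (some true, i, x) else e (some false, i, x + ρ)))
    else none

namespace hardABP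

variable {e : Option Bool × Fin t × Fin N → Fin n}

lemma width_eq {k : ℕ} (hk : 0 < k) (hkt : k ≤ t * (N + 1)) : (hardABP F e).width k = 2 * N :=
  if_neg (by omega)

lemma label_last (u v : ℕ) : (hardABP F e).label (t * (N + 1)) u v = some (Sum.inl 1) := by
  simp [hardABP]

lemma label_selector (i : Fin t) (u v : ℕ) :
    (hardABP F e).label (i * (N + 1)) u v =
      if v % 2 = 0 then some (Sum.inr (e (none, i, Fin.ofNat N (v / 2)))) else none := by
  have := (block_add_lt (N := N) i N.zero_le).ne
  simp_all [hardABP]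

lemma label_matching (i : Fin t) (x : Fin N) (u v : ℕ) :
    (hardABP F e).label (i * (N + 1) + (x + 1)) u v =
      if u / 2 = v / 2 then some (Sum.inr (if v % 2 = 0 then e (some true, i, x)
        else e (some false, i, x + Fin.ofNat N (v / 2)))) else none := by
  have hmod : (i * (N + 1) + (x + 1)) % (N + 1) = x + 1 := by
    rw [Nat.mul_add_mod_self_right, Nat.mod_eq_of_lt (by omega)]
  have hdiv : (i * (N + 1) + (x + 1)) / (N + 1) = i := by
    rw [mul_comm, Nat.mul_add_div (by omega), Nat.div_eq_of_lt (by omega), add_zero]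
  simp [hardABP, hmod, hdiv, (block_add_lt i (Nat.succ_le_of_lt x.isLt)).ne]

lemma exists_of_label_eq_var {k u v : ℕ} {y : Fin n} (hk : k < (hardABP F e).m)
    (hy : (hardABP F e).label k u v = some (Sum.inr y)) :
    ∃ i : Fin t, (k = i * (N + 1) ∧ ∃ ρ, y = e (none, i, ρ)) ∨
      ∃ x : Fin N, k = i * (N + 1) + (x + 1) ∧
        (y = e (some true, i, x) ∨ y = e (some false, i, x + Fin.ofNat N (v / 2))) := by
  have hkt : k < t * (N + 1) := by
    refine (Nat.lt_succ_iff.1 hk).lt_of_ne ?_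
    rintro rfl
    simp [label_last] at hy
  let i : Fin t := ⟨k / (N + 1), (Nat.div_lt_iff_lt_mul N.succ_pos).2 hkt⟩
  have hki : k = i * (N + 1) + k % (N + 1) := (Nat.div_add_mod' k (N + 1)).symm
  refine ⟨i, ?_⟩
  rcases hd : k % (N + 1) with _ | d
  · rw [hd, add_zero] at hki
    rw [hki, label_selector] at hy
    split_ifs at hy
    exact Or.inl ⟨hki, _, by simpa using hy.symm⟩
  · have hdN : d < N := by
      have : k % (N + 1) < N + 1 := k.mod_lt N.succ_pos
      omega
    rw [hd] at hki
    rw [hki, label_matching i ⟨d, hdN⟩] at hy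
    split_ifs at hy
    · exact Or.inr ⟨⟨d, hdN⟩, hki, Or.inl (by simpa using hy.symm)⟩
    · exact Or.inr ⟨⟨d, hdN⟩, hki, Or.inr (by simpa using hy.symm)⟩

lemma div_two_eq_of_isPath {π : ℕ → ℕ} (hπ : (hardABP F e).IsPath π) (i : Fin t) {d : ℕ}
    (hd : d ≤ N) : π (i * (N + 1) + (d + 1)) / 2 = π (i * (N + 1) + 1) / 2 := by
  induction d with
  | zero => rfl
  | succ d ih =>
    have edge := hπ.2.2.2 (i * (N + 1) + (d + 1)) ((block_add_lt i hd).trans (Nat.lt_succ_self _))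
    rw [label_matching i ⟨d, hd⟩] at edge
    rw [← ih (by omega)]
    by_contra hne
    exact edge (if_neg fun h => hne h.symm)

lemma synMultilinear (he : e.Injective) : (hardABP F e).SynMultilinear := by
  intro π hπ y
  rw [Set.ncard_le_one ((Set.finite_lt_nat (hardABP F e).m).subset fun k hk => hk.1)]
  rintro k ⟨hk, hy⟩ k' ⟨hk', hy'⟩
  obtain ⟨i, ⟨rfl, ρ, rfl⟩ | ⟨x, rfl, rfl | rfl⟩⟩ := exists_of_label_eq_var hk hy <;>
    obtain ⟨i', ⟨rfl, ρ', h⟩ | ⟨x', rfl, h | h⟩⟩ := exists_of_label_eq_var hk' hy' <;>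
    have h := he h <;> simp only [Prod.mk.injEq, Option.some.injEq, reduceCtorEq, false_and] at h
  · rw [h.2.1]
  · obtain ⟨-, rfl, rfl⟩ := h
    rfl
  · obtain ⟨-, rfl, h⟩ := h
    have same_matching (x : Fin N) :
        π (i * (N + 1) + (x + 1) + 1) / 2 = π (i * (N + 1) + 1) / 2 :=
      div_two_eq_of_isPath hπ i (Nat.succ_le_of_lt x.isLt)
    rw [same_matching, same_matching] at h
    rw [add_right_cancel h]

lemma size_le : (hardABP F e).size ≤ (t * (N + 1) + 2) * (2 * N + 1) := by
  refine (Finset.sum_le_card_nsmul _ _ (2 * N + 1) fun k _ => ?_).trans_eq (by simp [hardABP])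
  simp only [hardABP]
  split_ifs <;> omega

/-- The sum of the values of all nodes of layer `k`. -/
noncomputable def layerSum (F : Type) [Field F] (e : Option Bool × Fin t × Fin N → Fin n) (k : ℕ) :
    MvPolynomial (Fin n) F :=
  ∑ u ∈ Finset.range ((hardABP F e).width k), (hardABP F e).pathPoly 0 0 k u

lemma pathPoly_pair (i : Fin t) (ρ : Fin N) {d : ℕ} (hd : d ≤ N) :
    (hardABP F e).pathPoly 0 0 (i * (N + 1) + (d + 1)) (2 * ρ) +
        (hardABP F e).pathPoly 0 0 (i * (N + 1) + (d + 1)) (2 * ρ + 1) =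
      layerSum F e (i * (N + 1)) * (X (e (none, i, ρ)) * ∏ x ∈ Finset.range d,
        (X (e (some true, i, Fin.ofNat N x)) + X (e (some false, i, Fin.ofNat N x + ρ)))) := by
  induction d with
  | zero =>
    rw [zero_add, ABP.pathPoly_succ, ABP.pathPoly_succ]
    simp [label_selector, ABP.edgeVal, layerSum, Finset.sum_mul]
  | succ d ih =>
    have half_double_add_one : (2 * (ρ : ℕ) + 1) / 2 = ρ := by omega
    have edgeVal_ite (u : ℕ) (y : Fin n) :
        ABP.edgeVal (if u / 2 = ρ then some (Sum.inr y) else none : Option (F ⊕ Fin n)) =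
          if u / 2 = ρ then X y else 0 := by
      split_ifs <;> rfl
    rw [← add_assoc, ABP.pathPoly_succ, ABP.pathPoly_succ]
    simp only [zero_add, label_matching i ⟨d, hd⟩, half_double_add_one, edgeVal_ite,
      Nat.mul_mod_right, Nat.mul_div_cancel_left _ two_pos, if_true]
    rw [width_eq (by omega) (block_add_lt i hd).le, sum_range_two_mul_ite_div_eq _ _ ρ.isLt,
      sum_range_two_mul_ite_div_eq _ _ ρ.isLt, ih (by omega), Finset.prod_range_succ]
    have ofNat_d : Fin.ofNat N d = ⟨d, hd⟩ := Fin.ext (Nat.mod_eq_of_lt hd)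
    have ofNat_ρ : Fin.ofNat N ρ = ρ := Fin.ext (Nat.mod_eq_of_lt ρ.isLt)
    rw [ofNat_d, ofNat_ρ, if_neg (by omega)]
    ring

lemma layerSum_succ (i : Fin t) :
    layerSum F e ((i + 1) * (N + 1)) = layerSum F e (i * (N + 1)) * hardBlock F e i := by
  have := block_add_lt (N := N) i le_rfl
  rw [add_one_mul, layerSum, width_eq (by omega) (by omega), sum_range_two_mul, Finset.sum_range,
    hardBlock, Finset.mul_sum]
  refine Fintype.sum_congr _ _ fun ρ => ?_
  rw [pathPoly_pair i ρ le_rfl, Finset.prod_range]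
  simp

lemma layerSum_mul (k : ℕ) (hk : k ≤ t) :
    layerSum F e (k * (N + 1)) = ∏ i ∈ Finset.range k, hardBlock F e (Fin.ofNat t i) := by
  induction k with
  | zero => simp [layerSum, (hardABP F e).w0, ABP.pathPoly_zero]
  | succ k ih =>
    have : Fin.ofNat t k = ⟨k, hk⟩ := Fin.ext (Nat.mod_eq_of_lt hk)
    rw [Finset.prod_range_succ, ← ih (by omega), this]
    exact layerSum_succ ⟨k, hk⟩

theorem eval_eq : (hardABP F e).eval = hardPoly F e := by
  rw [ABP.eval_eq_pathPoly]
  change (hardABP F e).pathPoly 0 0 (t * (N + 1) + 1) 0 = _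
  simp only [ABP.pathPoly_succ, zero_add, label_last, ABP.edgeVal, C_1, mul_one]
  refine (layerSum_mul t le_rfl).trans ?_
  simp [Finset.prod_range, hardPoly]

end hardABP

end HardPolynomial

section Anticoncentration

open Finset symmDiff

lemma centralBinom_sq_mul_le (n : ℕ) : n.centralBinom ^ 2 * (2 * n + 1) ≤ 16 ^ n := by
  induction n with
  | zero => simp
  | succ n ih =>
    refine Nat.le_of_mul_le_mul_left ?_ (show 0 < (n + 1) ^ 2 by positivity)
    calc
      (n + 1) ^ 2 * ((n + 1).centralBinom ^ 2 * (2 * (n + 1) + 1))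
        = ((n + 1) * (n + 1).centralBinom) ^ 2 * (2 * (n + 1) + 1) := by ring
      _ = n.centralBinom ^ 2 * (2 * n + 1) * (4 * ((2 * n + 1) * (2 * (n + 1) + 1))) := by
        rw [Nat.succ_mul_centralBinom_succ]
        ring
      _ ≤ 16 ^ n * (4 * (4 * (n + 1) ^ 2)) :=
        Nat.mul_le_mul ih (Nat.mul_le_mul_left _ (by nlinarith))
      _ = (n + 1) ^ 2 * 16 ^ (n + 1) := by ring

lemma two_mul_mul_centralBinom_le (K : ℕ) :
    2 * (K * (2 * K ^ 2).centralBinom) ≤ 2 ^ (4 * K ^ 2) := by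
  refine (Nat.pow_le_pow_iff_left two_ne_zero).1 ?_
  calc
    (2 * (K * (2 * K ^ 2).centralBinom)) ^ 2
      = (2 * K ^ 2).centralBinom ^ 2 * (2 * (2 * K ^ 2)) := by ring
    _ ≤ (2 * K ^ 2).centralBinom ^ 2 * (2 * (2 * K ^ 2) + 1) :=
      Nat.mul_le_mul_left _ (Nat.le_succ _)
    _ ≤ 16 ^ (2 * K ^ 2) := centralBinom_sq_mul_le _
    _ = (2 ^ (4 * K ^ 2)) ^ 2 := by
      rw [show 16 = 2 ^ 4 by norm_num, ← pow_mul, ← pow_mul]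
      ring_nf

lemma card_le_of_abs_sub_two_mul_lt {J : Finset ℕ} {c : ℤ} {K : ℕ}
    (hJ : ∀ j ∈ J, |c - 2 * j| < K) : #J ≤ K := by
  rcases J.eq_empty_or_nonempty with rfl | hne
  · simp
  · have subset_window : J ⊆ Ico (J.min' hne) (J.min' hne + K) := fun j hj => by
      have := J.min'_le j hj
      have := abs_lt.1 (hJ _ (J.min'_mem hne))
      have := abs_lt.1 (hJ j hj)
      rw [mem_Ico]
      omega
    simpa using card_le_card subset_window

variable {Q : Type}

lemma sum_eq_card_symmDiff_sub_card [DecidableEq Q] {S D : Finset Q} {σ : Q → ℤ}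
    (hpos : ∀ q ∈ S \ D, σ q = 1) (hneg : ∀ q ∈ S ∩ D, σ q = -1) :
    ∑ q ∈ S, σ q = #(S ∆ D) - #D := by
  have card_symmDiff : #(S ∆ D) = #(S \ D) + #(D \ S) :=
    card_union_of_disjoint disjoint_sdiff_sdiff
  have card_D := card_sdiff_add_card_inter D S
  rw [← sum_inter_add_sum_sdiff S D, sum_congr rfl hpos, sum_congr rfl hneg]
  simp only [sum_const, nsmul_eq_mul, card_symmDiff, ← card_D, inter_comm D S]
  push_cast
  ring

lemma two_mul_card_abs_sub_two_mul_sum_lt_le {E : Finset Q} {K : ℕ} (hE : #E = 4 * K ^ 2)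
    {σ : Q → ℤ} (hσ : ∀ q ∈ E, σ q = 1 ∨ σ q = -1) (c : ℤ) :
    2 * #{S ∈ E.powerset | |c - 2 * ∑ q ∈ S, σ q| < K} ≤ 2 ^ #E := by
  classical
  let D : Finset Q := {q ∈ E | σ q = -1}
  let J : Finset ℕ := {j ∈ range (#E + 1) | |c + 2 * #D - 2 * j| < K}
  have card_J : #J ≤ K := card_le_of_abs_sub_two_mul_lt fun j hj => (mem_filter.1 hj).2
  have sum_eq (S : Finset Q) (hS : S ⊆ E) : ∑ q ∈ S, σ q = #(S ∆ D) - #D := by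
    refine sum_eq_card_symmDiff_sub_card (fun q hq => ?_) fun q hq => ?_
    · simp only [D, mem_sdiff, mem_filter, not_and] at hq
      exact (hσ q (hS hq.1)).resolve_right (hq.2 (hS hq.1))
    · exact (mem_filter.1 (mem_inter.1 hq).2).2
  have card_le_levels : #{S ∈ E.powerset | |c - 2 * ∑ q ∈ S, σ q| < K} ≤
      #(J.biUnion fun j => E.powersetCard j) := by
    refine card_le_card_of_injOn (· ∆ D) (fun S hS => ?_) (symmDiff_left_injective D).injOn
    obtain ⟨hSE, hlt⟩ := mem_filter.1 (mem_coe.1 hS)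
    rw [mem_powerset] at hSE
    rw [sum_eq S hSE] at hlt
    have hsub : S ∆ D ⊆ E :=
      union_subset (sdiff_subset.trans hSE) (sdiff_subset.trans (filter_subset _ _))
    refine mem_biUnion.2 ⟨#(S ∆ D), mem_filter.2 ⟨?_, ?_⟩, mem_powersetCard.2 ⟨hsub, rfl⟩⟩
    · exact mem_range.2 (Nat.lt_succ_of_le (card_le_card hsub))
    · convert hlt using 2
      ring
  have card_level (j : ℕ) (_ : j ∈ J) : #(E.powersetCard j) ≤ (2 * K ^ 2).centralBinom := by
    rw [card_powersetCard, hE, show 4 * K ^ 2 = 2 * (2 * K ^ 2) by ring]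
    exact Nat.choose_le_centralBinom _ _
  calc
    2 * #{S ∈ E.powerset | |c - 2 * ∑ q ∈ S, σ q| < K}
      ≤ 2 * (#J * (2 * K ^ 2).centralBinom) :=
        Nat.mul_le_mul_left _ (card_le_levels.trans (card_biUnion_le_card_mul _ _ _ card_level))
    _ ≤ 2 * (K * (2 * K ^ 2).centralBinom) := by gcongr
    _ ≤ 2 ^ #E := hE ▸ two_mul_mul_centralBinom_le K

variable [Fintype Q] [DecidableEq Q]

/-- The sum of the `c q` with sign `+` for `q ∈ A` and sign `-` for `q ∉ A`. -/
def signedSum (c : Q → ℤ) (A : Finset Q) : ℤ :=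
  ∑ q, if q ∈ A then c q else -c q

lemma signedSum_symmDiff (c : Q → ℤ) (A S : Finset Q) :
    signedSum c (A ∆ S) = signedSum c A - 2 * ∑ q ∈ S, if q ∈ A then c q else -c q := by
  rw [signedSum, signedSum, ← Fintype.sum_ite_mem S, mul_sum, ← sum_sub_distrib]
  refine sum_congr rfl fun q _ => ?_
  by_cases hA : q ∈ A <;> by_cases hS : q ∈ S <;> simp [mem_symmDiff, hA, hS] <;> ring

lemma signedSum_symmDiff_of_eq_zero {c : Q → ℤ} {S : Finset Q} (hS : ∀ q ∈ S, c q = 0)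
    (A : Finset Q) : signedSum c (A ∆ S) = signedSum c A := by
  rw [signedSum_symmDiff, sum_eq_zero fun q hq => by simp [hS q hq], mul_zero, sub_zero]

lemma two_mul_card_abs_signedSum_symmDiff_lt_le {E : Finset Q} {K : ℕ} (hE : #E = 4 * K ^ 2)
    {c : Q → ℤ} (hc : ∀ q ∈ E, c q = 1 ∨ c q = -1) (A : Finset Q) :
    2 * #{S ∈ E.powerset | |signedSum c (A ∆ S)| < K} ≤ 2 ^ #E := by
  simp only [signedSum_symmDiff]
  refine two_mul_card_abs_sub_two_mul_sum_lt_le hE (fun q hq => ?_) _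
  rcases hc q hq with h | h <;> by_cases hA : q ∈ A <;> simp [h, hA]

end Anticoncentration

section RandomFlips

open Finset symmDiff

variable {Q : Type} [DecidableEq Q]

lemma sum_symmDiff_ite_le {p : Finset Q → Prop} [DecidablePred p] {D : Finset Q} (A : Finset Q)
    (hp : 2 * #{S ∈ D.powerset | ¬p (A ∆ S)} ≤ 2 ^ #D) :
    ∑ S ∈ D.powerset, (if p (A ∆ S) then 1 / 2 else 1 : ℝ) ≤ 3 / 4 * 2 ^ #D := by
  have ite_eq (S : Finset Q) : (if p (A ∆ S) then 1 / 2 else 1 : ℝ) =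
      1 / 2 + 1 / 2 * if ¬p (A ∆ S) then 1 else 0 := by
    split_ifs <;> norm_num
  have hp' : (2 * #{S ∈ D.powerset | ¬p (A ∆ S)} : ℝ) ≤ 2 ^ #D := mod_cast hp
  simp only [ite_eq, sum_add_distrib, ← mul_sum, sum_boole, sum_const, card_powerset,
    nsmul_eq_mul]
  push_cast
  linarith

variable [Fintype Q]

lemma sum_mul_le_of_sum_symmDiff_le (E : Finset Q) {g ψ : Finset Q → ℝ} {γ : ℝ}
    (hg : ∀ A, 0 ≤ g A) (hinv : ∀ A, ∀ S ⊆ E, g (A ∆ S) = g A)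
    (hψ : ∀ A, ∑ S ∈ E.powerset, ψ (A ∆ S) ≤ γ * 2 ^ #E) :
    ∑ A, g A * ψ A ≤ γ * ∑ A, g A := by
  have sum_flip (S : Finset Q) (hS : S ∈ E.powerset) : ∑ A, g A * ψ A = ∑ A, g A * ψ (A ∆ S) := by
    rw [← Equiv.sum_comp (symmDiff_left_involutive S).toPerm]
    exact sum_congr rfl fun A _ => by
      simp only [Function.Involutive.coe_toPerm, hinv A S (mem_powerset.1 hS)]
  refine le_of_mul_le_mul_left ?_ (show (0 : ℝ) < 2 ^ #E by positivity)
  calc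
    2 ^ #E * ∑ A, g A * ψ A = ∑ S ∈ E.powerset, ∑ A, g A * ψ (A ∆ S) := by
      rw [← sum_congr rfl sum_flip, sum_const, card_powerset, nsmul_eq_mul]
      push_cast
      rfl
    _ = ∑ A, g A * ∑ S ∈ E.powerset, ψ (A ∆ S) := by
      rw [sum_comm]
      simp only [mul_sum]
    _ ≤ ∑ A, g A * (γ * 2 ^ #E) :=
      sum_le_sum fun A _ => mul_le_mul_of_nonneg_left (hψ A) (hg A)
    _ = 2 ^ #E * (γ * ∑ A, g A) := by
      rw [← sum_mul]
      ring

variable {big : ℕ → Finset Q → Prop} [∀ k, DecidablePred (big k)] {E : ℕ → Finset Q}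
  {I : Finset ℕ}

-- Conditioned on the events with smaller index, a uniformly random flip inside `E k` makes `big k`
-- true with probability at least `1 / 2`.
lemma sum_prod_ite_le (hinv : ∀ k ∈ I, ∀ k' < k, ∀ A, ∀ S ⊆ E k, big k' (A ∆ S) ↔ big k' A)
    (hbig : ∀ k ∈ I, ∀ A, 2 * #{S ∈ (E k).powerset | ¬big k (A ∆ S)} ≤ 2 ^ #(E k)) :
    ∑ A, ∏ k ∈ I, (if big k A then 1 / 2 else 1 : ℝ) ≤ (3 / 4) ^ #I * 2 ^ Fintype.card Q := by
  induction I using Finset.induction_on_max with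
  | empty => simp
  | insert a I lt_a ih =>
    have a_notMem : a ∉ I := fun h => lt_irrefl a (lt_a a h)
    have ih := ih (fun k hk => hinv k (mem_insert_of_mem hk))
      fun k hk => hbig k (mem_insert_of_mem hk)
    have ha := mem_insert_self a I
    simp only [prod_insert a_notMem, mul_comm (ite (big a _) _ _)]
    calc
      ∑ A, (∏ k ∈ I, if big k A then 1 / 2 else 1) * (if big a A then 1 / 2 else 1 : ℝ)
        ≤ 3 / 4 * ∑ A, ∏ k ∈ I, if big k A then 1 / 2 else 1 := by
          refine sum_mul_le_of_sum_symmDiff_le (E a) (fun A => prod_nonneg fun k _ => ?_)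
            (fun A S hS => prod_congr rfl fun k hk => ?_)
            fun A => sum_symmDiff_ite_le A (hbig a ha A)
          · split_ifs <;> norm_num
          · simp only [hinv a ha k (lt_a k hk) A S hS]
      _ ≤ 3 / 4 * ((3 / 4) ^ #I * 2 ^ Fintype.card Q) := by gcongr
      _ = (3 / 4) ^ #(insert a I) * 2 ^ Fintype.card Q := by
        rw [card_insert_of_notMem a_notMem, pow_succ', mul_assoc]

lemma card_few_big_mul_le {m : ℕ}
    (hinv : ∀ k ∈ I, ∀ k' < k, ∀ A, ∀ S ⊆ E k, big k' (A ∆ S) ↔ big k' A)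
    (hbig : ∀ k ∈ I, ∀ A, 2 * #{S ∈ (E k).powerset | ¬big k (A ∆ S)} ≤ 2 ^ #(E k))
    (hm : 8 * m ≤ #I) : #{A | #{k ∈ I | big k A} < m} * 4 ^ m ≤ 2 ^ Fintype.card Q := by
  have prod_eq (A : Finset Q) :
      ∏ k ∈ I, (if big k A then 1 / 2 else 1 : ℝ) = (1 / 2) ^ #{k ∈ I | big k A} := by
    rw [← prod_filter, prod_const]
  have markov : #{A | #{k ∈ I | big k A} < m} * (1 / 2 : ℝ) ^ m ≤
      ∑ A, ∏ k ∈ I, (if big k A then 1 / 2 else 1 : ℝ) := by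
    simp only [prod_eq]
    rw [← nsmul_eq_mul, ← sum_const]
    refine (sum_le_sum fun A hA => ?_).trans (sum_le_univ_sum_of_nonneg fun A => by positivity)
    exact pow_le_pow_of_le_one (by norm_num) (by norm_num) (mem_filter.1 hA).2.le
  have decay : (3 / 4 : ℝ) ^ #I ≤ (1 / 8) ^ m := by
    refine (pow_le_pow_of_le_one (by norm_num) (by norm_num) hm).trans ?_
    rw [pow_mul]
    gcongr
    norm_num
  have real_bound : (#{A | #{k ∈ I | big k A} < m} : ℝ) * 4 ^ m ≤ 2 ^ Fintype.card Q := calc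
    (#{A | #{k ∈ I | big k A} < m} : ℝ) * 4 ^ m
      = #{A | #{k ∈ I | big k A} < m} * (1 / 2 : ℝ) ^ m * 8 ^ m := by
        rw [mul_assoc, ← mul_pow]
        norm_num
    _ ≤ (1 / 8) ^ m * 2 ^ Fintype.card Q * 8 ^ m := by
        refine mul_le_mul_of_nonneg_right (markov.trans ?_) (by positivity)
        exact (sum_prod_ite_le hinv hbig).trans (by gcongr)
    _ = 2 ^ Fintype.card Q := by
        rw [mul_right_comm, ← mul_pow]
        norm_num
  exact_mod_cast real_bound

end RandomFlips

section UnionBound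

open Finset

lemma exists_forall_not_of_card_mul_le {ι Ω : Type} [Fintype ι] [Fintype Ω] [Nonempty Ω] {C : ℕ}
    (hC : Fintype.card ι < C) {bad : ι → Ω → Prop} [∀ j, DecidablePred (bad j)]
    (hbad : ∀ j, #{ω | bad j ω} * C ≤ Fintype.card Ω) : ∃ ω, ∀ j, ¬bad j ω := by
  classical
  by_contra! hcon
  have univ_subset : (univ : Finset Ω) ⊆ univ.biUnion fun j => {ω | bad j ω} := fun ω _ => by
    simpa using hcon ω
  have card_le : Fintype.card Ω ≤ ∑ j, #{ω | bad j ω} :=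
    (card_le_card univ_subset).trans card_biUnion_le
  refine (Nat.mul_lt_mul_of_pos_right hC (Fintype.card_pos (α := Ω))).not_ge ?_
  calc
    C * Fintype.card Ω ≤ ∑ j, #{ω | bad j ω} * C := by
      rw [← sum_mul, mul_comm]
      exact Nat.mul_le_mul_right C card_le
    _ ≤ Fintype.card ι * Fintype.card Ω := by
      simpa using sum_le_card_nsmul univ _ _ fun j _ => hbad j

-- A Chernoff bound: weight the bad coordinates by `16`.
lemma card_mostly_bad_mul_le {β α : Type} [Fintype β] [DecidableEq β] [Fintype α]
    {bad : β → α → Prop} [∀ i, DecidablePred (bad i)]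
    (hbad : ∀ i, 15 * #{a | bad i a} ≤ Fintype.card α) :
    #{r : β → α | Fintype.card β < 2 * #{i | bad i (r i)}} * 2 ^ Fintype.card β ≤
      Fintype.card (β → α) := by
  have weight (i : β) : ∑ a, (if bad i a then 16 else 1) ≤ 2 * Fintype.card α := by
    have ite_eq (a : α) : (if bad i a then 16 else 1) = 1 + 15 * if bad i a then 1 else 0 := by
      split_ifs <;> rfl
    simp only [ite_eq, sum_add_distrib, ← mul_sum, ← card_filter]
    have := hbad i
    simp only [sum_const, card_univ, smul_eq_mul, mul_one]
    omega
  refine Nat.le_of_mul_le_mul_right ?_ (show 0 < 2 ^ Fintype.card β by positivity)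
  calc
    #{r : β → α | Fintype.card β < 2 * #{i | bad i (r i)}} * 2 ^ Fintype.card β *
        2 ^ Fintype.card β
      = ∑ r : β → α with Fintype.card β < 2 * #{i | bad i (r i)}, 4 ^ Fintype.card β := by
        rw [sum_const, smul_eq_mul, mul_assoc, ← mul_pow, show 2 * 2 = 4 from rfl]
    _ ≤ ∑ r : β → α with Fintype.card β < 2 * #{i | bad i (r i)},
          ∏ i, (if bad i (r i) then 16 else 1) := by
        refine sum_le_sum fun r hr => ?_
        rw [← prod_filter, prod_const, show 16 = 4 ^ 2 by norm_num, ← pow_mul]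
        exact Nat.pow_le_pow_right (by norm_num) (mem_filter.1 hr).2.le
    _ ≤ ∑ r : β → α, ∏ i, (if bad i (r i) then 16 else 1) :=
        sum_le_sum_of_subset (subset_univ _)
    _ = ∏ i, ∑ a, (if bad i a then 16 else 1) := by
        rw [prod_univ_sum, Fintype.piFinset_univ]
    _ ≤ ∏ _i : β, 2 * Fintype.card α := prod_le_prod' fun i _ => weight i
    _ = Fintype.card (β → α) * 2 ^ Fintype.card β := by
        rw [prod_const, card_univ, mul_pow, mul_comm, Fintype.card_fun]

end UnionBound

section Matching

open Finset

lemma sum_card_eq_shift_le {α γ : Type} [AddGroup α] [Fintype α] [DecidableEq γ] {g h : α → γ}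
    {M : ℕ} (hh : ∀ b, #{x | h x = b} ≤ M) :
    ∑ ρ, #{x | g x = h (x + ρ)} ≤ Fintype.card α * M := by
  simp only [card_filter]
  rw [sum_comm]
  refine (sum_le_card_nsmul univ _ M fun x _ => ?_).trans_eq (by simp)
  rw [← card_filter]
  refine le_trans ?_ (hh (g x))
  refine card_le_card_of_injOn (x + ·) (fun ρ hρ => ?_) (add_right_injective x).injOn
  simpa [eq_comm] using hρ

lemma card_bad_shift_le {α γ : Type} [AddGroup α] [Fintype α] [DecidableEq γ] {g h : α → γ}
    {M : ℕ} (hh : ∀ b, #{x | h x = b} ≤ M) :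
    #{ρ | Fintype.card α ≤ 2 * #{x | g x = h (x + ρ)}} ≤ 2 * M := by
  refine Nat.le_of_mul_le_mul_right ?_ (Fintype.card_pos (α := α))
  calc
    #{ρ | Fintype.card α ≤ 2 * #{x | g x = h (x + ρ)}} * Fintype.card α
      ≤ ∑ ρ with Fintype.card α ≤ 2 * #{x | g x = h (x + ρ)}, 2 * #{x | g x = h (x + ρ)} :=
        card_nsmul_le_sum _ _ _ fun ρ hρ => (mem_filter.1 hρ).2
    _ ≤ ∑ ρ, 2 * #{x | g x = h (x + ρ)} := sum_le_sum_of_subset (subset_univ _)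
    _ ≤ 2 * M * Fintype.card α := by
        rw [← mul_sum, mul_assoc, mul_comm M]
        exact Nat.mul_le_mul_left 2 (sum_card_eq_shift_le hh)

/-- The pairs `(true, q)`, `(false, q)` whose two elements lie in different segments. -/
def splitPairs {Q : Type} [Fintype Q] (seg : Bool × Q → ℕ) : Finset Q :=
  {q | seg (true, q) ≠ seg (false, q)}

/-- Reindexing that turns the matching of `(true, i, x)` with `(false, i, x + r i)` into the
matching of `(true, q)` with `(false, q)`. -/
def shiftMatching {β α : Type} [Add α] (r : β → α) : Bool × β × α → Bool × β × α
  | (true, i, x) => (true, i, x)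
  | (false, i, x) => (false, i, x + r i)

lemma shiftMatching_injective {β α : Type} [Add α] [IsRightCancelAdd α] (r : β → α) :
    (shiftMatching r).Injective := by
  rintro ⟨_ | _, i, x⟩ ⟨_ | _, i', x'⟩ h <;>
    simp only [shiftMatching, Prod.mk.injEq, reduceCtorEq, false_and, true_and] at h
  · obtain ⟨rfl, h⟩ := h
    rw [add_right_cancel h]
  · obtain ⟨rfl, rfl⟩ := h
    rfl

variable {ι β α : Type} [Fintype β] [Fintype α] [AddGroup α]

lemma card_prod_le_four_mul_card_splitPairs {seg : Bool × β × α → ℕ} {r : β → α}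
    (hr : 2 * #{i | Fintype.card α ≤
      2 * #{x | seg (true, i, x) = seg (false, i, x + r i)}} ≤ Fintype.card β) :
    Fintype.card β * Fintype.card α ≤ 4 * #(splitPairs (seg ∘ shiftMatching r)) := by
  let coincidences (i : β) : ℕ := #{x | seg (true, i, x) = seg (false, i, x + r i)}
  let good : Finset β := {i | ¬Fintype.card α ≤ 2 * coincidences i}
  have card_good : Fintype.card β ≤ 2 * #good := by
    have : _ + #good = _ :=
      card_filter_add_card_filter_not (s := univ) fun i => Fintype.card α ≤ 2 * coincidences i
    rw [card_univ] at this
    simp only [coincidences] at this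
    omega
  have card_split : #(splitPairs (seg ∘ shiftMatching r)) =
      ∑ i, (Fintype.card α - coincidences i) := by
    rw [splitPairs, card_filter, Fintype.sum_prod_type]
    refine sum_congr rfl fun i _ => ?_
    have := card_filter_add_card_filter_not (s := univ)
      fun x => seg (true, i, x) = seg (false, i, x + r i)
    rw [← card_filter, ← card_univ, ← this, Nat.add_sub_cancel_left]
    rfl
  calc
    Fintype.card β * Fintype.card α ≤ 2 * (#good * Fintype.card α) := by
      rw [← mul_assoc]
      exact Nat.mul_le_mul_right _ card_good
    _ ≤ 2 * ∑ i ∈ good, 2 * (Fintype.card α - coincidences i) := by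
      refine Nat.mul_le_mul_left 2 (card_nsmul_le_sum _ _ _ fun i hi => ?_)
      have := (mem_filter.1 hi).2
      omega
    _ ≤ 2 * ∑ i, 2 * (Fintype.card α - coincidences i) :=
      Nat.mul_le_mul_left 2 (sum_le_sum_of_subset (subset_univ _))
    _ = 4 * #(splitPairs (seg ∘ shiftMatching r)) := by
      rw [← mul_sum, card_split, ← mul_assoc, show 2 * 2 = 4 from rfl]

lemma exists_shiftMatching_card_splitPairs [Fintype ι] {M : ℕ}
    (hι : Fintype.card ι < 2 ^ Fintype.card β) (hM : 30 * M ≤ Fintype.card α)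
    {seg : ι → Bool × β × α → ℕ} (hseg : ∀ j k, (seg j ⁻¹' {k}).ncard ≤ M) :
    ∃ r : β → α, ∀ j,
      Fintype.card β * Fintype.card α ≤ 4 * #(splitPairs (seg j ∘ shiftMatching r)) := by
  classical
  let coincidences (j : ι) (i : β) (ρ : α) : ℕ :=
    #{x | seg j (true, i, x) = seg j (false, i, x + ρ)}
  have card_fiber (j : ι) (i : β) (k : ℕ) : #{x | seg j (false, i, x) = k} ≤ M := by
    refine le_trans ?_ (hseg j k)
    rw [← Set.ncard_coe_finset]
    refine Set.ncard_le_ncard_of_injOn (fun x => (false, i, x)) (fun x hx => ?_) ?_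
    · simpa using hx
    · exact fun x _ x' _ h => by simpa using h
  have card_bad (j : ι) (i : β) :
      15 * #{ρ | Fintype.card α ≤ 2 * coincidences j i ρ} ≤ Fintype.card α := by
    have := card_bad_shift_le (g := fun x => seg j (true, i, x)) (card_fiber j i)
    simp only [coincidences]
    omega
  obtain ⟨r, hr⟩ := exists_forall_not_of_card_mul_le hι
    fun j => card_mostly_bad_mul_le (bad := fun i ρ => Fintype.card α ≤ 2 * coincidences j i ρ)
      (card_bad j)
  exact ⟨r, fun j => card_prod_le_four_mul_card_splitPairs (not_lt.1 (hr j))⟩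

end Matching

section Imbalance

open Finset symmDiff

variable {Q : Type} [Fintype Q]

/-- The split pairs whose earlier element lies in segment `k`. -/
def splitPairsAt (seg : Bool × Q → ℕ) (k : ℕ) : Finset Q :=
  {q ∈ splitPairs seg | min (seg (true, q)) (seg (false, q)) = k}

lemma card_splitPairsAt_le (seg : Bool × Q → ℕ) (k : ℕ) :
    #(splitPairsAt seg k) ≤ (seg ⁻¹' {k}).ncard := by
  rw [← Set.ncard_coe_finset]
  refine Set.ncard_le_ncard_of_injOn (fun q => (decide (seg (true, q) = k), q)) (fun q hq => ?_)
    fun q _ q' _ h => (Prod.ext_iff.1 h).2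
  have hmin : min (seg (true, q)) (seg (false, q)) = k := (mem_filter.1 (mem_coe.1 hq)).2
  by_cases h : seg (true, q) = k
  · simp [h]
  · simpa [h] using (min_choice _ _).resolve_left (fun h' => h (h'.symm.trans hmin)) ▸ hmin

lemma card_splitPairs_eq_sum {seg : Bool × Q → ℕ} {T : ℕ} (hT : ∀ v, seg v < T) :
    #(splitPairs seg) = ∑ k ∈ range T, #(splitPairsAt seg k) :=
  card_eq_sum_card_fiberwise fun _ _ => mem_coe.2 (mem_range.2 (min_lt_of_left_lt (hT _)))

lemma sum_range_le_card_mul_add {a : ℕ → ℕ} {T M : ℕ} (ha : ∀ k, a k ≤ M) (b : ℕ) :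
    ∑ k ∈ range T, a k ≤ #{k ∈ range T | b ≤ a k} * M + T * b := by
  rw [← sum_filter_add_sum_filter_not (range T) fun k => b ≤ a k]
  refine Nat.add_le_add (sum_le_card_nsmul _ _ _ fun k _ => ha k) ?_
  refine (sum_le_card_nsmul _ _ b fun k hk => (not_le.1 (mem_filter.1 hk).2).le).trans ?_
  exact Nat.mul_le_mul_right b ((card_filter_le _ _).trans_eq (card_range T))

lemma eight_mul_le_card_segments {seg : Bool × Q → ℕ} {τ K : ℕ} (hK : 0 < K)
    (hT : ∀ v, seg v < 128 * τ) (hseg : ∀ k, (seg ⁻¹' {k}).ncard ≤ 64 * K ^ 2)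
    (hsplit : 4096 * τ * K ^ 2 ≤ 4 * #(splitPairs seg)) :
    8 * τ ≤ #{k ∈ range (128 * τ) | 4 * K ^ 2 ≤ #(splitPairsAt seg k)} := by
  have := sum_range_le_card_mul_add (T := 128 * τ)
    (fun k => (card_splitPairsAt_le seg k).trans (hseg k)) (4 * K ^ 2)
  rw [← card_splitPairs_eq_sum hT] at this
  refine Nat.le_of_mul_le_mul_right ?_ (show 0 < 256 * K ^ 2 by positivity)
  linarith

/-- The coefficient of the pair `q` in the imbalance of segment `k`. -/
def segCoeff (seg : Bool × Q → ℕ) (k : ℕ) (q : Q) : ℤ :=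
  (if seg (true, q) = k then 1 else 0) - if seg (false, q) = k then 1 else 0

lemma segCoeff_eq_one_or_neg_one {seg : Bool × Q → ℕ} {k : ℕ} {q : Q}
    (hq : q ∈ splitPairsAt seg k) : segCoeff seg k q = 1 ∨ segCoeff seg k q = -1 := by
  simp only [splitPairsAt, splitPairs, mem_filter] at hq
  unfold segCoeff
  split_ifs <;> omega

lemma segCoeff_eq_zero {seg : Bool × Q → ℕ} {k k' : ℕ} (hk : k' < k) {q : Q}
    (hq : q ∈ splitPairsAt seg k) : segCoeff seg k' q = 0 := by
  simp only [splitPairsAt, mem_filter] at hq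
  unfold segCoeff
  split_ifs <;> omega

variable [DecidableEq Q]

/-- One element of each pair: `(true, q)` for `q ∈ A` and `(false, q)` for `q ∉ A`. -/
def pairSide (A : Finset Q) : Set (Bool × Q) :=
  {v | v.1 = decide (v.2 ∈ A)}

lemma signedSum_segCoeff (seg : Bool × Q → ℕ) (A : Finset Q) (k : ℕ) :
    signedSum (segCoeff seg k) A =
      ((seg ⁻¹' {k} ∩ pairSide A).ncard : ℤ) - (seg ⁻¹' {k} \ pairSide A).ncard := by
  classical
  have ncard_eq (S : Set (Bool × Q)) :
      S.ncard = ∑ q, ((if (true, q) ∈ S then 1 else 0) + if (false, q) ∈ S then 1 else 0 : ℤ) := by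
    rw [Set.ncard_eq_toFinset_card', Set.toFinset_card, Fintype.card_subtype, card_filter,
      Fintype.sum_prod_type, Fintype.sum_bool, ← sum_add_distrib]
    push_cast
    rfl
  rw [ncard_eq, ncard_eq, ← sum_sub_distrib]
  refine sum_congr rfl fun q _ => ?_
  by_cases hA : q ∈ A <;> simp [segCoeff, pairSide, hA]

lemma two_mul_sum_minSide_add {seg : Bool × Q → ℕ} {T : ℕ} (hT : ∀ v, seg v < T) (A : Finset Q) :
    2 * ∑ k ∈ range T, (minSide seg (pairSide A) k : ℤ) +
      ∑ k ∈ range T, |signedSum (segCoeff seg k) A| = 2 * Fintype.card Q := by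
  classical
  have segment (k : ℕ) : 2 * (minSide seg (pairSide A) k : ℤ) + |signedSum (segCoeff seg k) A| =
      #{v | seg v = k} := by
    have card_segment : #{v | seg v = k} = (seg ⁻¹' {k}).ncard := by
      rw [← Set.ncard_coe_finset]
      simp [Set.preimage]
    rw [signedSum_segCoeff, card_segment,
      ← Set.ncard_inter_add_ncard_sdiff_eq_ncard (seg ⁻¹' {k}) (pairSide A), minSide]
    grind
  have card_univ_eq := card_eq_sum_card_fiberwise (f := seg) (s := univ) (t := range T)
    fun v _ => mem_coe.2 (mem_range.2 (hT v))
  rw [mul_sum, ← sum_add_distrib, sum_congr rfl fun k _ => segment k, ← Nat.cast_sum,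
    ← card_univ_eq, card_univ, Fintype.card_prod, Fintype.card_bool]
  push_cast
  rfl

lemma card_few_imbalanced_mul_le {seg : Bool × Q → ℕ} {I : Finset ℕ} {K m : ℕ}
    (hI : ∀ k ∈ I, 4 * K ^ 2 ≤ #(splitPairsAt seg k)) (hm : 8 * m ≤ #I) :
    #{A | #{k ∈ I | (K : ℤ) ≤ |signedSum (segCoeff seg k) A|} < m} * 4 ^ m ≤
      2 ^ Fintype.card Q := by
  have (k : ℕ) : ∃ E : Finset Q, k ∈ I → E ⊆ splitPairsAt seg k ∧ #E = 4 * K ^ 2 := by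
    by_cases hk : k ∈ I
    · obtain ⟨E, hE⟩ := exists_subset_card_eq (hI k hk)
      exact ⟨E, fun _ => hE⟩
    · exact ⟨∅, fun h => absurd h hk⟩
  choose E hE using this
  refine card_few_big_mul_le (E := E) (fun k hk k' hk' A S hS => ?_) (fun k hk A => ?_) hm
  · rw [signedSum_symmDiff_of_eq_zero fun q hq => segCoeff_eq_zero hk' ((hE k hk).1 (hS hq))]
  · simp only [not_le]
    exact two_mul_card_abs_signedSum_symmDiff_lt_le (hE k hk).2
      (fun q hq => segCoeff_eq_one_or_neg_one ((hE k hk).1 hq)) A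

lemma exists_mul_le_sum_abs_signedSum {ι : Type} [Fintype ι] {τ K : ℕ} (hK : 0 < K)
    (hι : Fintype.card ι < 4 ^ τ) {seg : ι → Bool × Q → ℕ} (hT : ∀ j v, seg j v < 128 * τ)
    (hseg : ∀ j k, (seg j ⁻¹' {k}).ncard ≤ 64 * K ^ 2)
    (hsplit : ∀ j, 4096 * τ * K ^ 2 ≤ 4 * #(splitPairs (seg j))) :
    ∃ A : Finset Q, ∀ j,
      (τ * K : ℤ) ≤ ∑ k ∈ range (128 * τ), |signedSum (segCoeff (seg j) k) A| := by
  let I (j : ι) : Finset ℕ := {k ∈ range (128 * τ) | 4 * K ^ 2 ≤ #(splitPairsAt (seg j) k)}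
  obtain ⟨A, hA⟩ := exists_forall_not_of_card_mul_le hι fun j =>
    (card_few_imbalanced_mul_le (I := I j) (fun k hk => (mem_filter.1 hk).2)
      (eight_mul_le_card_segments hK (hT j) (hseg j) (hsplit j))).trans_eq Fintype.card_finset.symm
  refine ⟨A, fun j => ?_⟩
  let J : Finset ℕ := {k ∈ I j | (K : ℤ) ≤ |signedSum (segCoeff (seg j) k) A|}
  have card_J : τ ≤ #J := not_lt.1 (hA j)
  calc
    (τ * K : ℤ) ≤ #J • (K : ℤ) := by
      rw [nsmul_eq_mul]
      gcongr
    _ ≤ ∑ k ∈ J, |signedSum (segCoeff (seg j) k) A| :=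
      card_nsmul_le_sum _ _ _ fun k hk => (mem_filter.1 hk).2
    _ ≤ ∑ k ∈ range (128 * τ), |signedSum (segCoeff (seg j) k) A| :=
      sum_le_sum_of_subset_of_nonneg ((filter_subset _ _).trans (filter_subset _ _))
        fun _ _ _ => abs_nonneg _

end Imbalance

section FullRank

open Finset

open scoped Classical in
/-- The field element substituted for `v` under the assignment `z`: the bits `false`, `true` stand
for `0`, `1` on `Y` and for `-1`, `0` off `Y`. This makes the two values of a pair that is separated
by `Y` cancel exactly when its bits differ, in every characteristic. -/
noncomputable def shiftedBit {V : Type} (F : Type) [Field F] (Y : Set V) (z : V → Bool) (v : V) :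
    F :=
  (if z v then 1 else 0) - if v ∈ Y then 0 else 1

variable {F Q : Type} [Field F] [DecidableEq Q]

open scoped Classical in
lemma shiftedBit_add_shiftedBit (A : Finset Q) (y y' : Q → Bool) (q : Q) :
    shiftedBit F (pairSide A) ((pairSide A).piecewise (y ∘ Prod.snd) (y' ∘ Prod.snd)) (true, q) +
      shiftedBit F (pairSide A) ((pairSide A).piecewise (y ∘ Prod.snd) (y' ∘ Prod.snd)) (false, q) =
    if y q = y' q then if y q then 1 else -1 else 0 := by
  by_cases hA : q ∈ A <;> cases hy : y q <;> cases hy' : y' q <;>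
    simp [shiftedBit, Set.piecewise, pairSide, hA, hy, hy']

lemma two_pow_card_le_of_hasSplitRankLE [Fintype Q] {A : Finset Q} {r : ℕ}
    (h : HasSplitRankLE (pairSide A) (fun z => ∏ q,
      (shiftedBit F (pairSide A) z (true, q) + shiftedBit F (pairSide A) z (false, q))) r) :
    2 ^ Fintype.card Q ≤ r := by
  classical
  let lift (y : Q → Bool) : Bool × Q → Bool := y ∘ Prod.snd
  have card_le := h.card_le_of_diagonal lift lift (fun y y' hne => ?_) fun y => ?_
  · simpa using card_le
  · obtain ⟨q, hq⟩ := Function.ne_iff.1 hne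
    refine prod_eq_zero (mem_univ q) ?_
    rw [shiftedBit_add_shiftedBit, if_neg hq]
  · refine prod_ne_zero_iff.2 fun q _ => ?_
    rw [shiftedBit_add_shiftedBit, if_pos rfl]
    split_ifs <;> simp

end FullRank

section LowerBound

open Finset

lemma exists_matching_sum_minSide_le {ι β α : Type} [Fintype ι] [Fintype β] [Fintype α]
    [DecidableEq β] [DecidableEq α] [AddGroup α] {τ K : ℕ} (hβ : Fintype.card β = 2 * τ)
    (hα : Fintype.card α = 2048 * K ^ 2) (hι : Fintype.card ι < 4 ^ τ)
    {seg : ι → Bool × β × α → ℕ} (hT : ∀ j v, seg j v < 128 * τ)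
    (hseg : ∀ j k, (seg j ⁻¹' {k}).ncard ≤ 64 * K ^ 2) :
    ∃ (r : β → α) (A : Finset (β × α)), ∀ j,
      2 * ∑ k ∈ range (128 * τ), minSide (seg j ∘ shiftMatching r) (pairSide A) k + τ * K ≤
        2 * (4096 * τ * K ^ 2) := by
  have hK : 0 < K := Nat.pos_of_ne_zero fun h => by simp [h] at hα
  obtain ⟨r, hr⟩ := exists_shiftMatching_card_splitPairs (by rwa [hβ, pow_mul]) (by omega) hseg
  have card_fiber (j : ι) (k : ℕ) :
      ((seg j ∘ shiftMatching r) ⁻¹' {k}).ncard ≤ 64 * K ^ 2 :=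
    (Set.ncard_le_ncard_of_injOn (t := seg j ⁻¹' {k}) (shiftMatching r) (fun _ hv => hv)
      (shiftMatching_injective r).injOn).trans (hseg j k)
  have card_pairs : Fintype.card β * Fintype.card α = 4096 * τ * K ^ 2 := by
    rw [hβ, hα]
    ring
  obtain ⟨A, hA⟩ := exists_mul_le_sum_abs_signedSum (seg := fun j => seg j ∘ shiftMatching r) hK hι
    (fun j v => hT j (shiftMatching r v)) card_fiber fun j => card_pairs ▸ hr j
  refine ⟨r, A, fun j => ?_⟩
  have total := two_mul_sum_minSide_add (seg := seg j ∘ shiftMatching r)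
    (fun v => hT j (shiftMatching r v)) A
  have imbalance := hA j
  rw [Fintype.card_prod, card_pairs] at total
  push_cast at total
  zify
  linarith

variable {F : Type} [Field F] {t N n : ℕ}

/-- The variable of the pair element `v`, where `r` selects the matching in each block. -/
def matchedVar (e : Option Bool × Fin t × Fin N → Fin n) (r : Fin t → Fin N)
    (v : Bool × Fin t × Fin N) : Fin n :=
  e (Prod.map some id (shiftMatching r v))

/-- The substitution that fixes the selectors to the matchings `r` and turns the assignment `z` of
the pair elements into field elements with `shiftedBit`. -/
noncomputable def matchedPoint (F : Type) [Field F] (e : Option Bool × Fin t × Fin N → Fin n)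
    (r : Fin t → Fin N) (A : Finset (Fin t × Fin N)) (z : Bool × Fin t × Fin N → Bool) :
    Fin n → F :=
  Function.extend (matchedVar e r) (shiftedBit F (pairSide A) z) <|
    Function.extend (fun p => e (none, p)) (fun p => if p.2 = r p.1 then 1 else 0) 0

variable {e : Option Bool × Fin t × Fin N → Fin n} {r : Fin t → Fin N}
  {A : Finset (Fin t × Fin N)}

lemma dependsOn_shiftedBit {V : Type} (Y : Set V) (v : V) :
    DependsOn (fun z => shiftedBit F Y z v) {v} := fun z z' h => by
  simp only [shiftedBit, h v rfl]

lemma matchedVar_injective (he : e.Injective) : (matchedVar e r).Injective :=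
  he.comp (((Option.some_injective _).prodMap Function.injective_id).comp
    (shiftMatching_injective r))

lemma dependsOn_matchedPoint (he : e.Injective) (i : Fin n) :
    DependsOn (fun z => matchedPoint F e r A z i) (matchedVar e r ⁻¹' {i}) := by
  by_cases hi : ∃ v, matchedVar e r v = i
  · obtain ⟨v, rfl⟩ := hi
    simp only [matchedPoint, (matchedVar_injective he).extend_apply]
    exact (dependsOn_shiftedBit _ v).mono (Set.singleton_subset_iff.2 rfl)
  · intro z z' _
    simp only [matchedPoint, Function.extend_apply' _ _ _ hi]

lemma eval_matchedPoint_hardPoly (he : e.Injective) (z : Bool × Fin t × Fin N → Bool) :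
    MvPolynomial.eval (matchedPoint F e r A z) (hardPoly F e) = ∏ p : Fin t × Fin N,
      (shiftedBit F (pairSide A) z (true, p) + shiftedBit F (pairSide A) z (false, p)) := by
  have at_matchedVar (v : Bool × Fin t × Fin N) :
      matchedPoint F e r A z (matchedVar e r v) = shiftedBit F (pairSide A) z v :=
    (matchedVar_injective he).extend_apply _ _ v
  have at_selector (i : Fin t) (ρ : Fin N) :
      matchedPoint F e r A z (e (none, i, ρ)) = if ρ = r i then 1 else 0 := by
    have not_matchedVar : ¬∃ v, matchedVar e r v = e (none, i, ρ) := by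
      rintro ⟨v, hv⟩
      simpa using congrArg Prod.fst (he hv)
    rw [matchedPoint, Function.extend_apply' _ _ _ not_matchedVar]
    exact (he.comp (Prod.mk_right_injective none)).extend_apply _ _ (i, ρ)
  rw [eval_hardPoly e at_selector]
  exact prod_congr rfl fun p _ => congrArg₂ (· + ·) (at_matchedVar (true, p))
    (at_matchedVar (false, p))

lemma two_pow_le_of_hardPoly_eq_sum_of_readsInOrder (he : e.Injective) {s w T B : ℕ}
    {P : Fin s → ABP F n} (hsum : hardPoly F e = ∑ j, (P j).eval) (hw : ∀ j, (P j).size ≤ w)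
    {seg : Fin s → Bool × Fin t × Fin N → ℕ} (hT : ∀ j v, seg j v < T)
    (hseg : ∀ j, (P j).ReadsInOrder (matchedVar e r) (seg j))
    (hB : ∀ j, ∑ k ∈ range T, minSide (seg j) (pairSide A) k ≤ B) :
    2 ^ (t * N) ≤ s * (w ^ T * 2 ^ B) := by
  have rank_summand (j : Fin s) : HasSplitRankLE (pairSide A)
      (fun z => MvPolynomial.eval (matchedPoint F e r A z) (P j).eval) (w ^ T * 2 ^ B) := by
    refine ((hseg j).hasSplitRankLE_eval (hT j) (dependsOn_matchedPoint he) _).mono ?_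
    rw [Fintype.card_bool]
    exact Nat.mul_le_mul (Nat.pow_le_pow_left (hw j) T) (Nat.pow_le_pow_right two_pos (hB j))
  have rank_hardPoly := HasSplitRankLE.sum univ fun j _ => rank_summand j
  simp only [← map_sum, ← hsum, eval_matchedPoint_hardPoly he, card_univ, Fintype.card_fin]
    at rank_hardPoly
  simpa using two_pow_card_le_of_hasSplitRankLE rank_hardPoly

theorem four_pow_le_of_hardPoly_eq_sum {τ K w W s : ℕ}
    {e : Option Bool × Fin (2 * τ) × Fin (2048 * K ^ 2) → Fin n} (he : e.Injective)
    (hw : w ≤ 2 ^ W) (hW : 4 + 256 * W < K) {P : Fin s → ABP F n} (hP : ∀ j, (P j).IsROABP)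
    (hPw : ∀ j, (P j).size ≤ w) (hsum : hardPoly F e = ∑ j, (P j).eval) : 4 ^ τ ≤ s := by
  have hK : 0 < K := by omega
  have : NeZero (2048 * K ^ 2) := ⟨by positivity⟩
  by_contra! hs
  have pairVar_injective : (e ∘ Prod.map some id).Injective :=
    he.comp ((Option.some_injective Bool).prodMap Function.injective_id)
  have card_pairVars : Nat.card (Bool × Fin (2 * τ) × Fin (2048 * K ^ 2)) ≤
      128 * τ * (64 * K ^ 2) := by
    rw [Nat.card_eq_fintype_card]
    simp only [Fintype.card_prod, Fintype.card_bool, Fintype.card_fin]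
    linarith
  choose seg seg_lt card_segment reads using
    fun j => (hP j).exists_readsInOrder pairVar_injective card_pairVars
  obtain ⟨r, A, hrA⟩ := exists_matching_sum_minSide_le (by simp) (by simp) (by simpa using hs)
    seg_lt card_segment
  let B : ℕ := (2 * (4096 * τ * K ^ 2) - τ * K) / 2
  have two_mul_B : 2 * B + τ * K ≤ 2 * (4096 * τ * K ^ 2) := by
    have : τ * K ≤ 2 * (4096 * τ * K ^ 2) := by nlinarith [Nat.le_self_pow two_ne_zero K]
    omega
  have rank_bound := two_pow_le_of_hardPoly_eq_sum_of_readsInOrder he hsum hPw (A := A) (r := r)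
    (B := B) (seg := fun j => seg j ∘ shiftMatching r) (fun j v => seg_lt j (shiftMatching r v))
    (fun j => (reads j).comp (shiftMatching r)) fun j => by have := hrA j; omega
  have two_pow_lt : 2 ^ (2 * τ * (2048 * K ^ 2)) < 2 ^ (2 * τ + (W * (128 * τ) + B)) := by
    rw [pow_add, pow_add, pow_mul 2 2, pow_mul 2 W]
    exact rank_bound.trans_lt <| Nat.mul_lt_mul_of_lt_of_le hs
      (Nat.mul_le_mul_right _ (Nat.pow_le_pow_left hw _)) (by positivity)
  have exponent_lt := (Nat.pow_lt_pow_iff_right one_lt_two).1 two_pow_lt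
  nlinarith [Nat.mul_le_mul_left τ hW.le]

end LowerBound

section Growth

open Filter Asymptotics

lemma monotone_eval_nat (q : Polynomial ℕ) : Monotone fun x => q.eval x := fun a b h => by
  simp only [Polynomial.eval_eq_sum]
  exact Finset.sum_le_sum fun i _ => Nat.mul_le_mul_left _ (Nat.pow_le_pow_left h i)

lemma eventually_eval_le_two_pow (q : Polynomial ℕ) : ∀ᶠ L in atTop, q.eval L ≤ 2 ^ L := by
  have little : (fun L : ℕ => ((q.eval L : ℕ) : ℝ)) =o[atTop] fun L => (2 : ℝ) ^ L := by
    induction q using Polynomial.induction_on' with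
    | add p q hp hq => simpa using hp.add hq
    | monomial d a =>
      simpa using (isLittleO_pow_const_const_pow_of_one_lt d one_lt_two).const_mul_left (a : ℝ)
  filter_upwards [little.bound one_pos] with L hL
  rw [Real.norm_natCast, norm_pow, Real.norm_ofNat, one_mul] at hL
  exact_mod_cast hL

lemma eventually_eval_mul_pow_le_two_pow_div (q : Polynomial ℕ) (C d : ℕ) {m : ℕ} (hm : 0 < m) :
    ∀ᶠ K in atTop, q.eval (C * K ^ d) ≤ 2 ^ (K / m) := by
  let q' := q.comp (Polynomial.C C * (Polynomial.C m * (Polynomial.X + 1)) ^ d)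
  filter_upwards [(Nat.tendsto_div_const_atTop hm.ne').eventually (eventually_eval_le_two_pow q')]
    with K hK
  calc
    q.eval (C * K ^ d) ≤ q.eval (C * (m * (K / m + 1)) ^ d) := by
      refine monotone_eval_nat q ?_
      gcongr
      exact (Nat.lt_mul_div_succ K hm).le
    _ = q'.eval (K / m) := by simp [q']
    _ ≤ 2 ^ (K / m) := hK

lemma mul_pow_rpow_le {C x δ : ℝ} (hC : 1 ≤ C) (hx : 1 ≤ x) (hδ : δ ≤ 1) {b d : ℕ}
    (hbd : b * δ ≤ d) : (C * x ^ b) ^ δ ≤ C * x ^ d := by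
  rw [Real.mul_rpow (by positivity) (by positivity), ← Real.rpow_natCast_mul (by positivity),
    ← Real.rpow_natCast x d]
  gcongr
  exact Real.rpow_le_self_of_one_le hC hδ

end Growth

section Separation

open Filter

/-- `h` is a sum of polynomials computed by ROABPs of size at most `w` only if there are at least
`k` summands. -/
def RequiresROABPs {F : Type} [Field F] {n : ℕ} (h : MvPolynomial (Fin n) F) (w k : ℕ) : Prop :=
  ∀ (s : ℕ) (f : Fin s → MvPolynomial (Fin n) F),
    (∀ j, ∃ P : ABP F n, P.IsROABP ∧ P.eval = f j ∧ P.size ≤ w) → h = ∑ j, f j → k ≤ s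

lemma exists_multilinear_requiresROABPs (F : Type) [Field F] {τ K n : ℕ} (hτ : 0 < τ) (hK : 0 < K)
    (hn : n = 12288 * (τ * K ^ 2)) :
    ∃ h : MvPolynomial (Fin n) F, ((∀ i, h.degreeOf i ≤ 1) ∧
        ∃ P : ABP F n, P.SynMultilinear ∧ P.eval = h ∧ P.size ≤ (n + 2) * (n + 1)) ∧
      ∀ W, 4 + 256 * W < K → RequiresROABPs h (2 ^ W) (4 ^ τ) := by
  have : NeZero (2 * τ) := ⟨by positivity⟩
  have : NeZero (2048 * K ^ 2) := ⟨by positivity⟩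
  let e : Option Bool × Fin (2 * τ) × Fin (2048 * K ^ 2) ≃ Fin n := Fintype.equivOfCardEq <| by
    simp only [Fintype.card_prod, Fintype.card_option, Fintype.card_bool, Fintype.card_fin, hn]
    ring
  have multilinear := hardABP.synMultilinear (F := F) e.injective
  refine ⟨hardPoly F e, ⟨fun i => ?_, hardABP F e, multilinear, hardABP.eval_eq, ?_⟩, ?_⟩
  · rw [← hardABP.eval_eq]
    exact multilinear.degreeOf_eval_le_one i
  · have K_sq_le : K ^ 2 ≤ τ * K ^ 2 := Nat.le_mul_of_pos_left _ hτ
    have τ_le : τ ≤ τ * K ^ 2 := Nat.le_mul_of_pos_right _ (by positivity)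
    exact hardABP.size_le.trans (Nat.mul_le_mul (by linarith) (by linarith))
  · intro W hW s f hf hsum
    choose P hP P_eval P_size using hf
    exact four_pow_le_of_hardPoly_eq_sum e.injective le_rfl hW hP P_size
      (by simpa only [P_eval] using hsum)

/-- The number of variables of the hard polynomial with parameters `τ = K ^ a` and `K`: there are
`3` variables for each of the `2τ · 2048K²` pairs of a block and an index. -/
def numVars (a K : ℕ) : ℕ :=
  12288 * K ^ (a + 2)

lemma numVars_strictMono (a : ℕ) : StrictMono (numVars a) :=
  (Nat.pow_left_strictMono (by omega)).const_mul (by norm_num)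

lemma exists_multilinear_requiresROABPs_numVars (F : Type) [Field F] (a n : ℕ) :
    ∃ h : MvPolynomial (Fin n) F, ∀ K > 0, n = numVars a K →
      ((∀ i, h.degreeOf i ≤ 1) ∧
        ∃ P : ABP F n, P.SynMultilinear ∧ P.eval = h ∧ P.size ≤ (n + 2) * (n + 1)) ∧
      ∀ W, 4 + 256 * W < K → RequiresROABPs h (2 ^ W) (4 ^ K ^ a) := by
  by_cases hn : ∃ K > 0, n = numVars a K
  · obtain ⟨K, hK, hnK⟩ := hn
    obtain ⟨h, hh⟩ := exists_multilinear_requiresROABPs F (pow_pos hK a) hK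
      (hnK.trans (congrArg (12288 * ·) (pow_add K a 2)))
    refine ⟨h, fun K' _ hnK' => ?_⟩
    rwa [(numVars_strictMono a).injective (hnK'.symm.trans hnK)]
  · exact ⟨0, fun K hK hnK => absurd ⟨K, hK, hnK⟩ hn⟩

lemma exists_nat_add_two_mul_le {δ : ℝ} (hδ : δ < 1) : ∃ a : ℕ, ((a + 2 : ℕ) : ℝ) * δ ≤ a := by
  obtain ⟨a, ha⟩ := exists_nat_ge (2 * δ / (1 - δ))
  rw [div_le_iff₀ (sub_pos.2 hδ)] at ha
  refine ⟨a, ?_⟩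
  push_cast
  linarith

lemma two_rpow_le_four_pow {δ : ℝ} (hδ : δ ≤ 1) {a K : ℕ} (ha : ((a + 2 : ℕ) : ℝ) * δ ≤ a)
    (hK : 0 < K) : (2 : ℝ) ^ ((1 / 12288) * (numVars a K : ℝ) ^ δ) ≤ 4 ^ K ^ a := by
  have rpow_le : (numVars a K : ℝ) ^ δ ≤ 12288 * (K : ℝ) ^ a := by
    rw [numVars]
    push_cast
    exact mul_pow_rpow_le (by norm_num) (mod_cast hK) hδ ha
  calc
    (2 : ℝ) ^ ((1 / 12288) * (numVars a K : ℝ) ^ δ) ≤ 2 ^ ((K ^ a : ℕ) : ℝ) := by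
      refine Real.rpow_le_rpow_of_exponent_le one_le_two ?_
      push_cast
      linarith
    _ = 2 ^ K ^ a := Real.rpow_natCast 2 _
    _ ≤ 4 ^ K ^ a := by gcongr; norm_num

theorem sum_of_ROABPs_lower_bound_general (G : Type) [Field G] {δ : ℝ} (hδ : δ < 1) :
    ∃ c : ℝ, 0 < c ∧ ∃ (p : Polynomial ℕ) (S : Set ℕ) (h : (n : ℕ) → MvPolynomial (Fin n) G),
      S.Infinite ∧
      (∀ n ∈ S, (∀ i, (h n).degreeOf i ≤ 1) ∧
        ∃ P : ABP G n, P.SynMultilinear ∧ P.eval = h n ∧ P.size ≤ p.eval n) ∧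
      (∀ q : Polynomial ℕ, ∃ N : ℕ, ∀ n ∈ S, N ≤ n →
        ∀ (s : ℕ) (f : Fin s → MvPolynomial (Fin n) G),
          (∀ j, ∃ P : ABP G n, P.IsROABP ∧ P.eval = f j ∧ P.size ≤ q.eval n) →
          h n = ∑ j, f j →
          (2 : ℝ) ^ (c * (n : ℝ) ^ δ) ≤ (s : ℝ)) := by
  obtain ⟨a, ha⟩ := exists_nat_add_two_mul_le hδ
  choose h hh using exists_multilinear_requiresROABPs_numVars G a
  refine ⟨1 / 12288, by norm_num, (Polynomial.X + 2) * (Polynomial.X + 1),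
    numVars a '' Set.Ioi 0, h, (Set.Ioi_infinite 0).image (numVars_strictMono a).injective.injOn,
    ?_, fun q => ?_⟩
  · rintro _ ⟨K, hK, rfl⟩
    simpa using (hh _ K hK rfl).1
  obtain ⟨K₀, hK₀⟩ := eventually_atTop.1
    (eventually_eval_mul_pow_le_two_pow_div q 12288 (a + 2) (m := 512) (by norm_num))
  refine ⟨numVars a (K₀ + 9), ?_⟩
  rintro _ ⟨K, hK, rfl⟩ hK₀K s f hf hsum
  replace hK₀K : K₀ + 9 ≤ K := (numVars_strictMono a).le_iff_le.1 hK₀K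
  have four_pow_le : 4 ^ K ^ a ≤ s := by
    refine (hh _ K hK rfl).2 (K / 512) (by omega) s f (fun j => ?_) hsum
    obtain ⟨P, hP, hPf, P_size⟩ := hf j
    exact ⟨P, hP, hPf, P_size.trans (hK₀ K (by omega))⟩
  exact (two_rpow_le_four_pow hδ.le ha hK).trans (mod_cast four_pow_le)

end Separation

/-- a sub-exponential separation between sums of ROABPs and syntactically
multilinear ABPs: there are a constant `c > 0`, a polynomial bound `p` and a field `G` such
that for infinitely many `n` (the set `S`) there is a multilinear polynomial `h n` in `n`
variables computable by an smABP of size at most `p(n)`, and for every polynomial bound `q`,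
for all sufficiently large `n ∈ S`, whenever `h n = f_1 + ⋯ + f_s` with each `f_j` computable
by a ROABP of size at most `q(n)`, we must have `s ≥ 2^{c · n^{1/500}}`. -/
theorem sum_of_ROABPs_lower_bound :
    ∃ c : ℝ, 0 < c ∧ ∃ (p : Polynomial ℕ) (G : Type) (_ : Field G)
      (S : Set ℕ) (h : (n : ℕ) → MvPolynomial (Fin n) G),
      S.Infinite ∧
      (∀ n ∈ S, (∀ i, (h n).degreeOf i ≤ 1) ∧
        ∃ P : ABP G n, P.SynMultilinear ∧ P.eval = h n ∧ P.size ≤ p.eval n) ∧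
      (∀ q : Polynomial ℕ, ∃ N : ℕ, ∀ n ∈ S, N ≤ n →
        ∀ (s : ℕ) (f : Fin s → MvPolynomial (Fin n) G),
          (∀ j, ∃ P : ABP G n, P.IsROABP ∧ P.eval = f j ∧ P.size ≤ q.eval n) →
          h n = ∑ j, f j →
          (2 : ℝ) ^ (c * (n : ℝ) ^ ((1 : ℝ) / 500)) ≤ (s : ℝ)) := by
  obtain ⟨c, hc, hard⟩ :=
    sum_of_ROABPs_lower_bound_general (ZMod 2) (δ := 1 / 500) (by norm_num)
  exact ⟨c, hc, hard.imp fun p hp => ⟨ZMod 2, inferInstance, hp⟩⟩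
end
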